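/- Let N ≥ 3, let V satisfy condition (V), and let f satisfy conditions (f1), (f2), (f3). Then for every λ > Λ there exists a function u ∈ C²(ℝ^N) with u > 0 on ℝ^N satisfying −Δu = λ(V(x)u − f(u)) on all of ℝ^N (no decay at infinity is asserted). -/

import Mathlib

open MeasureTheory Filter Metric Set
open scoped ENNReal NNReal Topology

noncomputable section

/-- Euclidean space `ℝ^N`. -/
abbrev Euc (N : ℕ) := EuclideanSpace ℝ (Fin N)

/-- The Laplace operator on `ℝ^N`: the sum of the second partial derivatives. -/
def lap (N : ℕ) (u : Euc N → ℝ) (x : Euc N) : ℝ :=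
  ∑ i : Fin N,
    fderiv ℝ (fun y => fderiv ℝ u y (EuclideanSpace.single i 1)) x (EuclideanSpace.single i 1)

/-- The principal eigenvalue `λ₁(R)`: the infimum of `∫_{B_R} |∇u|²` over smooth functions
compactly supported in the open ball `B_R` with `∫_{B_R} V u² = 1`. -/
def lam1 (N : ℕ) (V : Euc N → ℝ) (R : ℝ) : ℝ :=
  sInf { t : ℝ | ∃ u : Euc N → ℝ, ContDiff ℝ (⊤ : ℕ∞) u ∧ HasCompactSupport u ∧
    tsupport u ⊆ ball (0 : Euc N) R ∧
    (∫ x, V x * u x ^ 2) = 1 ∧ t = ∫ x, ‖gradient u x‖ ^ 2 }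

/-- `Λ := lim_{R → ∞} λ₁(R)`. -/
def Lam (N : ℕ) (V : Euc N → ℝ) : ℝ := limUnder atTop (lam1 N V)

/-- Condition (V): `V` is a bounded Hölder-continuous function whose positive part
`V⁺ = max(V, 0)` is nontrivial and decomposes as `V₁ + V₂` with `V₁ ∈ L^{N/2}` and
`|x|² V₂(x) → 0` as `|x| → ∞`. -/
def CondV (N : ℕ) (V V₁ V₂ : Euc N → ℝ) : Prop :=
  (∃ C β : ℝ≥0, 0 < β ∧ β ≤ 1 ∧ HolderWith C β V) ∧
  (∃ C : ℝ, ∀ x, |V x| ≤ C) ∧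
  (∃ x, 0 < V x) ∧
  (∀ x, max (V x) 0 = V₁ x + V₂ x) ∧
  MemLp V₁ ((N : ℝ≥0∞) / 2) volume ∧
  Tendsto (fun x : Euc N => ‖x‖ ^ 2 * V₂ x) (cocompact _) (𝓝 0)

/-- The decay condition: `V⁺(x) ≤ A |x|^{-2-α}`. -/
def CondVDecay (N : ℕ) (V : Euc N → ℝ) : Prop :=
  ∃ A α : ℝ, 0 < A ∧ 0 < α ∧
    ∀ x : Euc N, x ≠ 0 → max (V x) 0 ≤ A * ‖x‖ ^ (-2 - α)

/-- Conditions (f1), (f2), (f3) on the absorption term `f`. -/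
def CondF (N : ℕ) (V : Euc N → ℝ) (f : ℝ → ℝ) : Prop :=
  ContDiff ℝ 1 f ∧ (∀ u : ℝ, 0 ≤ u → 0 ≤ f u) ∧
  -- (f1)
  f 0 = 0 ∧ deriv f 0 = 0 ∧
  0 < Filter.liminf (fun u : ℝ => ((deriv f u / u : ℝ) : EReal)) (𝓝[>] (0 : ℝ)) ∧
  -- (f2)
  StrictMonoOn (fun u : ℝ => f u / u) (Ioi 0) ∧
  -- (f3)
  (∃ L : EReal, Tendsto (fun u : ℝ => ((f u / u : ℝ) : EReal)) atTop (𝓝 L) ∧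
    ((⨆ x, |V x| : ℝ) : EReal) < L)

/-- A solution of problem `(P_λ)`: a positive `C²` function solving the logistic equation
and decaying to zero at infinity. -/
structure IsSolution (N : ℕ) (V : Euc N → ℝ) (f : ℝ → ℝ) (lam : ℝ) (u : Euc N → ℝ) : Prop where
  smooth : ContDiff ℝ 2 u
  pos : ∀ x, 0 < u x
  eqn : ∀ x, -lap N u x = lam * (V x * u x - f (u x))
  decay : Tendsto u (cocompact (Euc N)) (𝓝 0)

/-- The surface integral `∫_{∂B_R} g dσ` over the sphere of radius `R`, written in polar
coordinates with respect to the canonical surface measure on the unit sphere. -/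
def sphereInt (N : ℕ) (g : Euc N → ℝ) (R : ℝ) : ℝ :=
  ∫ ω : sphere (0 : Euc N) 1, g (R • (ω : Euc N)) * R ^ (N - 1)
    ∂((volume : Measure (Euc N)).toSphere)

/-!
The equation is `-Δu = g(x, u)` with `g(x, t) = λ (V(x) t - f(t))`. By (f3) a large constant `M` is
a supersolution, and iterating the resolvent `(K - Δ)⁻¹` on `K u + g(x, u)`, where `K` exceeds the
Lipschitz constant of `g`, produces a decreasing sequence of positive functions `uₙ ≤ M`. The
resolvent is convolution with the Laplace transform of the heat kernel: this gives comparison,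
the strong maximum principle, uniform Lipschitz bounds on the iterates, and `C²` regularity for
Hölder right-hand sides, so the limit `u` is a solution, either positive or identically zero.

No subsolution is needed to exclude `u = 0`. Since `uₙ₊₁ ≤ uₙ`, the iteration gives
`-Δuₙ₊₁ / uₙ₊₁ ≥ g(x, uₙ) / uₙ`, and Picone's inequality `∫ φ² (-Δv / v) ≤ ∫ |∇φ|²` for `v > 0`
bounds `∫ φ² g(x, uₙ) / uₙ` by `∫ |∇φ|²` for every test function `φ`. If `uₙ → 0`, then
`g(x, uₙ) / uₙ → λ V(x)` because `f'(0) = 0`, hence `λ ∫ V φ² ≤ ∫ |∇φ|²` for all `φ`, which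
contradicts `λ > Λ`.
-/

open scoped SchwartzMap Laplacian InnerProductSpace

section DilatedConvolution

variable {E F : Type*} [NormedAddCommGroup E] [NormedSpace ℝ E] [MeasureSpace E]
  [NormedAddCommGroup F] [NormedSpace ℝ F] {h : E → ℝ} {B : ℝ}

/-- The convolution of `h` with the kernel `k` dilated to the scale `s`. The dilation is put on the
argument of `h`, so that no power of `s` occurs and `s = 0` is allowed. -/
def dilConv (k : E → F) (h : E → ℝ) (s : ℝ) (x : E) : F :=
  ∫ z, h (x - s • z) • k z

lemma norm_dilConv_le {k : E → F} (hk : Integrable k) (hB : ∀ x, |h x| ≤ B) (s : ℝ) (x : E) :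
    ‖dilConv k h s x‖ ≤ B * ∫ z, ‖k z‖ := by
  rw [dilConv, ← integral_const_mul]
  refine norm_integral_le_of_norm_le (hk.norm.const_mul B) (Eventually.of_forall fun z => ?_)
  rw [norm_smul]
  exact mul_le_mul_of_nonneg_right (hB _) (norm_nonneg _)

lemma dilConv_eq_integral_translate [BorelSpace E] [(volume : Measure E).IsAddRightInvariant]
    (k : E → F) (h : E → ℝ) {s : ℝ} (hs : s ≠ 0) (x : E) :
    dilConv k h s x = ∫ y, h (-(s • y)) • k (y + s⁻¹ • x) := by
  rw [dilConv, ← integral_add_right_eq_self _ (s⁻¹ • x)]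
  refine integral_congr_ae (Eventually.of_forall fun y => ?_)
  simp only [smul_add, smul_inv_smul₀ hs, sub_add_cancel_right]

variable [BorelSpace E]

lemma integrable_dilConv_integrand {k : E → F} (hk : Integrable k) (hh : Continuous h)
    (hB : ∀ x, |h x| ≤ B) (s : ℝ) (x : E) : Integrable fun z => h (x - s • z) • k z :=
  hk.bdd_smul B (hh.comp (by fun_prop)).aestronglyMeasurable (Eventually.of_forall fun _ => hB _)

lemma clm_dilConv [CompleteSpace F] {G : Type*} [NormedAddCommGroup G] [NormedSpace ℝ G]
    [CompleteSpace G] (L : F →L[ℝ] G) {k : E → F} (hk : Integrable k) (hh : Continuous h)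
    (hB : ∀ x, |h x| ≤ B) (s : ℝ) (x : E) :
    L (dilConv k h s x) = dilConv (fun z => L (k z)) h s x := by
  simp only [dilConv, ← map_smul,
    L.integral_comp_comm (integrable_dilConv_integrand hk hh hB s x)]

lemma continuous_dilConv {k : E → F} (hk : Integrable k) (hh : Continuous h)
    (hB : ∀ x, |h x| ≤ B) : Continuous fun p : ℝ × E => dilConv k h p.1 p.2 := by
  refine continuous_of_dominated (bound := fun z => B * ‖k z‖)
    (fun p => (integrable_dilConv_integrand hk hh hB p.1 p.2).aestronglyMeasurable)
    (fun p => Eventually.of_forall fun z => ?_) (hk.norm.const_mul B)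
    (Eventually.of_forall fun z => ?_)
  · rw [norm_smul]
    exact mul_le_mul_of_nonneg_right (hB _) (norm_nonneg _)
  · fun_prop

lemma tendsto_dilConv {g : ℕ → E → ℝ} {k : E → F} (hk : Integrable k) (hg : ∀ n, Continuous (g n))
    (hgB : ∀ n x, |g n x| ≤ B) (hlim : ∀ x, Tendsto (g · x) atTop (𝓝 (h x))) (s : ℝ) (x : E) :
    Tendsto (fun n => dilConv k (g n) s x) atTop (𝓝 (dilConv k h s x)) := by
  refine tendsto_integral_of_dominated_convergence (fun z => B * ‖k z‖)
    (fun n => (integrable_dilConv_integrand hk (hg n) (hgB n) s x).aestronglyMeasurable)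
    (hk.norm.const_mul B) (fun n => Eventually.of_forall fun z => ?_)
    (Eventually.of_forall fun z => (hlim _).smul_const _)
  rw [norm_smul]
  exact mul_le_mul_of_nonneg_right (hgB n _) (norm_nonneg _)

lemma norm_dilConv_le_of_holderWith {k : E → F} {C β : ℝ≥0} (hβ : 0 < β) (hk : Integrable k)
    (hk₀ : ∫ z, k z = 0) (hkβ : Integrable fun z => ‖z‖ ^ (β : ℝ) * ‖k z‖)
    (hh : HolderWith C β h) (hB : ∀ x, |h x| ≤ B) {s : ℝ} (hs : 0 ≤ s) (x : E) :
    ‖dilConv k h s x‖ ≤ C * (∫ z, ‖z‖ ^ (β : ℝ) * ‖k z‖) * s ^ (β : ℝ) := by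
  have centered : dilConv k h s x = ∫ z, (h (x - s • z) - h x) • k z := by
    have := integral_sub (integrable_dilConv_integrand hk (hh.continuous hβ) hB s x)
      (hk.smul (h x))
    simp only [Pi.smul_apply, integral_smul, hk₀, smul_zero, sub_zero] at this
    simp only [sub_smul, this, dilConv]
  rw [centered, mul_right_comm, ← integral_const_mul]
  refine norm_integral_le_of_norm_le (hkβ.const_mul _) (Eventually.of_forall fun z => ?_)
  have increment : |h (x - s • z) - h x| ≤ C * (s * ‖z‖) ^ (β : ℝ) := by
    simpa [Real.dist_eq, dist_eq_norm, norm_smul, abs_of_nonneg hs]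
      using hh.dist_le (x - s • z) x
  rw [norm_smul, Real.norm_eq_abs]
  calc |h (x - s • z) - h x| * ‖k z‖ ≤ C * (s * ‖z‖) ^ (β : ℝ) * ‖k z‖ := by gcongr
    _ = C * s ^ (β : ℝ) * (‖z‖ ^ (β : ℝ) * ‖k z‖) := by
      rw [Real.mul_rpow hs (norm_nonneg z)]; ring

end DilatedConvolution

section SchwartzKernel

variable {E F : Type*} [NormedAddCommGroup E] [NormedSpace ℝ E] [NormedAddCommGroup F]
  [NormedSpace ℝ F] {h : E → ℝ} {B : ℝ}

lemma exists_one_add_norm_pow_mul_le (k : 𝓢(E, F)) (m : ℕ) :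
    ∃ C, ∀ z, (1 + ‖z‖) ^ m * ‖k z‖ ≤ C :=
  ⟨_, fun z => by
    simpa using k.one_add_le_sup_seminorm_apply (𝕜 := ℝ) (m := (m, 0)) le_rfl le_rfl z⟩

variable [FiniteDimensional ℝ E] [MeasureSpace E] [BorelSpace E]
  [(volume : Measure E).IsAddHaarMeasure]

lemma exists_integrable_bound_translate (k : 𝓢(E, F)) (ξ₀ : E) :
    ∃ b : E → ℝ, Integrable b ∧ ∀ ξ ∈ closedBall ξ₀ 1, ∀ y, ‖k (y + ξ)‖ ≤ b y := by
  set m := (volume : Measure E).integrablePower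
  obtain ⟨C, hC⟩ := exists_one_add_norm_pow_mul_le k m
  refine ⟨fun y => 2 ^ m * C * (1 + ‖y + ξ₀‖) ^ (-(m : ℝ)),
    (Measure.integrable_pow_neg_integrablePower volume).comp_add_right ξ₀ |>.const_mul _,
    fun ξ hξ y => ?_⟩
  have hshift : 1 + ‖y + ξ₀‖ ≤ 2 * (1 + ‖y + ξ‖) := by
    have := norm_sub_le (y + ξ) (ξ - ξ₀)
    rw [show y + ξ - (ξ - ξ₀) = y + ξ₀ by abel] at this
    linarith [norm_nonneg (y + ξ), mem_closedBall_iff_norm.1 hξ]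
  simp only [Real.rpow_neg (by positivity : 0 ≤ 1 + ‖y + ξ₀‖), Real.rpow_natCast]
  rw [← div_eq_mul_inv, le_div_iff₀ (by positivity)]
  calc ‖k (y + ξ)‖ * (1 + ‖y + ξ₀‖) ^ m ≤ ‖k (y + ξ)‖ * (2 * (1 + ‖y + ξ‖)) ^ m := by gcongr
    _ = 2 ^ m * ((1 + ‖y + ξ‖) ^ m * ‖k (y + ξ)‖) := by rw [mul_pow]; ring
    _ ≤ 2 ^ m * C := by gcongr; exact hC _

lemma exists_integrable_bound_dilate (k : 𝓢(E, F)) {r₀ : ℝ} (hr₀ : 0 < r₀) :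
    ∃ b : E → ℝ, Integrable b ∧ ∀ r ∈ Ioi r₀, ∀ y, ‖k (r • y)‖ * ‖y‖ ≤ b y := by
  set m := (volume : Measure E).integrablePower
  obtain ⟨C, hC⟩ := exists_one_add_norm_pow_mul_le k (m + 1)
  refine ⟨fun y => r₀⁻¹ * C * (1 + ‖r₀ • y‖) ^ (-(m : ℝ)),
    (Measure.integrable_pow_neg_integrablePower volume).comp_smul hr₀.ne' |>.const_mul _,
    fun r (hr : r₀ < r) y => ?_⟩
  have hmono : r₀ * ‖y‖ ≤ ‖r • y‖ := by
    rw [norm_smul, Real.norm_of_nonneg (hr₀.trans hr).le]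
    gcongr
  simp only [norm_smul r₀ y, Real.norm_of_nonneg hr₀.le,
    Real.rpow_neg (by positivity : 0 ≤ 1 + r₀ * ‖y‖), Real.rpow_natCast]
  rw [mul_assoc, ← div_eq_mul_inv, ← div_eq_inv_mul, le_div_iff₀ hr₀, le_div_iff₀ (by positivity)]
  calc ‖k (r • y)‖ * ‖y‖ * r₀ * (1 + r₀ * ‖y‖) ^ m
      = (1 + r₀ * ‖y‖) ^ m * (r₀ * ‖y‖) * ‖k (r • y)‖ := by ring
    _ ≤ (1 + ‖r • y‖) ^ m * (1 + ‖r • y‖) * ‖k (r • y)‖ := by gcongr; linarith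
    _ ≤ C := by rw [← pow_succ]; exact hC _

lemma hasFDerivAt_integral_smul_translate (k : 𝓢(E, F)) (hh : Continuous h)
    (hB : ∀ x, |h x| ≤ B) (ξ₀ : E) :
    HasFDerivAt (fun ξ => ∫ y, h y • k (y + ξ)) (∫ y, h y • fderiv ℝ k (y + ξ₀)) ξ₀ := by
  obtain ⟨b, hb, hkb⟩ := exists_integrable_bound_translate (SchwartzMap.fderivCLM ℝ E F k) ξ₀
  have hk' : Continuous (fderiv ℝ k) := (SchwartzMap.fderivCLM ℝ E F k).continuous
  refine hasFDerivAt_integral_of_dominated_of_fderiv_le (bound := fun y => B * b y)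
    (F' := fun ξ y => h y • fderiv ℝ k (y + ξ)) (closedBall_mem_nhds ξ₀ one_pos)
    (Eventually.of_forall fun ξ => ?_) ?_ ?_ (Eventually.of_forall fun y ξ hξ => ?_)
    (hb.const_mul B) (Eventually.of_forall fun y ξ _ => ?_)
  · exact (hh.smul (k.continuous.comp (by fun_prop))).aestronglyMeasurable
  · exact (k.integrable.comp_add_right ξ₀).bdd_smul B hh.aestronglyMeasurable
      (Eventually.of_forall hB)
  · exact (hh.smul (hk'.comp (by fun_prop))).aestronglyMeasurable
  · rw [norm_smul]
    exact mul_le_mul (hB y) (hkb ξ hξ y) (norm_nonneg _) ((abs_nonneg _).trans (hB y))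
  · have := (k.hasFDerivAt (y + ξ)).comp ξ ((hasFDerivAt_id ξ).const_add y)
    exact this.const_smul (h y)

lemma hasFDerivAt_dilConv (k : 𝓢(E, F)) (hh : Continuous h) (hB : ∀ x, |h x| ≤ B) {s : ℝ}
    (hs : s ≠ 0) (x : E) :
    HasFDerivAt (dilConv k h s) (s⁻¹ • dilConv (fderiv ℝ k) h s x) x := by
  rw [funext (dilConv_eq_integral_translate k h hs), dilConv_eq_integral_translate _ h hs]
  have translate := hasFDerivAt_integral_smul_translate k (h := fun y => h (-(s • y)))
    (by fun_prop) (fun y => hB _) (s⁻¹ • x)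
  refine (translate.comp x ((hasFDerivAt_id x).const_smul s⁻¹)).congr_fderiv ?_
  ext v
  simp

lemma dilConv_eq_integral_dilate (k : E → F) (h : E → ℝ) {s : ℝ} (hs : 0 < s) (x : E) :
    dilConv k h s x = (s ^ Module.finrank ℝ E)⁻¹ • ∫ y, h (x - y) • k (s⁻¹ • y) := by
  have := Measure.integral_comp_smul volume (fun y => h (x - y) • k (s⁻¹ • y)) s
  simp only [inv_smul_smul₀ hs.ne'] at this
  rw [dilConv, this, abs_of_pos (by positivity)]

lemma hasDerivAt_integral_smul_dilate (k : 𝓢(E, F)) (hh : Continuous h) (hB : ∀ x, |h x| ≤ B)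
    {r : ℝ} (hr : 0 < r) :
    HasDerivAt (fun r : ℝ => ∫ y, h y • k (r • y)) (∫ y, h y • fderiv ℝ k (r • y) y) r := by
  obtain ⟨b, hb, hkb⟩ :=
    exists_integrable_bound_dilate (SchwartzMap.fderivCLM ℝ E F k) (half_pos hr)
  have hk' : Continuous (fderiv ℝ k) := (SchwartzMap.fderivCLM ℝ E F k).continuous
  refine (hasDerivAt_integral_of_dominated_loc_of_deriv_le (bound := fun y => B * b y)
    (F' := fun r y => h y • fderiv ℝ k (r • y) y) (Ioi_mem_nhds (half_lt_self hr))
    (Eventually.of_forall fun r => ?_) ?_ ?_ (Eventually.of_forall fun y ρ hρ => ?_)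
    (hb.const_mul B) (Eventually.of_forall fun y ρ _ => ?_)).2
  · exact (hh.smul (k.continuous.comp (by fun_prop))).aestronglyMeasurable
  · exact (k.integrable.comp_smul hr.ne').bdd_smul B hh.aestronglyMeasurable
      (Eventually.of_forall hB)
  · exact (hh.smul ((hk'.comp (by fun_prop)).clm_apply continuous_id)).aestronglyMeasurable
  · rw [norm_smul]
    exact mul_le_mul (hB y) ((ContinuousLinearMap.le_opNorm _ _).trans (hkb ρ hρ y))
      (norm_nonneg _) ((abs_nonneg _).trans (hB y))
  · have := (k.hasFDerivAt (ρ • y)).comp_hasDerivAt ρ ((hasDerivAt_id ρ).smul_const y)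
    simpa [Function.comp_def] using this.fun_const_smul (h y)

lemma hasDerivAt_dilConv_scale (k : 𝓢(E, F)) (hh : Continuous h) (hB : ∀ x, |h x| ≤ B) (x : E)
    {s : ℝ} (hs : 0 < s) :
    HasDerivAt (fun s => dilConv k h s x)
      (-s⁻¹ • (Module.finrank ℝ E • dilConv k h s x + dilConv (fun z => fderiv ℝ k z z) h s x))
      s := by
  set n := Module.finrank ℝ E with hn
  have hJ := (hasDerivAt_integral_smul_dilate k (h := fun y => h (x - y)) (by fun_prop)
    (fun y => hB _) (inv_pos.2 hs)).scomp s (hasDerivAt_inv hs.ne')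
  have hprod := ((hasDerivAt_pow n s).inv (by positivity)).smul hJ
  refine (hprod.congr_of_eventuallyEq ?_).congr_deriv ?_
  · filter_upwards [Ioi_mem_nhds hs] with t ht using dilConv_eq_integral_dilate k h ht x
  have hpow : n * s ^ (n - 1) = n * s ^ n / s := by
    rcases n.eq_zero_or_pos with h0 | h0
    · simp [h0]
    · rw [eq_div_iff hs.ne', mul_assoc, pow_sub_one_mul h0.ne']
  simp only [dilConv_eq_integral_dilate _ h hs x, map_smul, smul_comm _ s⁻¹, integral_smul, hpow,
    Pi.inv_apply, Function.comp_apply, ← hn]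
  match_scalars <;> field_simp

end SchwartzKernel

section SchwartzIntegrals

variable {E F : Type*} [NormedAddCommGroup E] [NormedSpace ℝ E] [FiniteDimensional ℝ E]
  [MeasureSpace E] [BorelSpace E] [NormedAddCommGroup F] [NormedSpace ℝ F]

lemma integrable_norm_rpow_mul [(volume : Measure E).HasTemperateGrowth] (k : 𝓢(E, F)) {β : ℝ}
    (hβ : 0 ≤ β) : Integrable fun z => ‖z‖ ^ β * ‖k z‖ := by
  refine (k.integrable.norm.add (k.integrable_pow_mul volume ⌈β⌉₊)).mono'
    ((by fun_prop (disch := assumption) : Continuous fun z : E => ‖z‖ ^ β).mul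
      k.continuous.norm).aestronglyMeasurable (Eventually.of_forall fun z => ?_)
  have hpow : ‖z‖ ^ β ≤ 1 + ‖z‖ ^ ⌈β⌉₊ := by
    rcases le_total ‖z‖ 1 with hz | hz
    · linarith [Real.rpow_le_one (norm_nonneg z) hz hβ, pow_nonneg (norm_nonneg z) ⌈β⌉₊]
    · have := Real.rpow_le_rpow_of_exponent_le hz (Nat.le_ceil β)
      rw [Real.rpow_natCast] at this
      linarith
  rw [Real.norm_of_nonneg (by positivity), Pi.add_apply, ← one_add_mul]
  gcongr

lemma integrable_fderiv [(volume : Measure E).HasTemperateGrowth] (k : 𝓢(E, F)) :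
    Integrable (fderiv ℝ k) :=
  (SchwartzMap.fderivCLM ℝ E F k).integrable

set_option maxSynthPendingDepth 3 in
lemma integrable_fderiv_fderiv [(volume : Measure E).HasTemperateGrowth] (k : 𝓢(E, F)) :
    Integrable (fderiv ℝ (fderiv ℝ k)) :=
  integrable_fderiv (SchwartzMap.fderivCLM ℝ E F k)

lemma integral_fderiv_eq_zero [(volume : Measure E).IsAddHaarMeasure] (k : 𝓢(E, F)) :
    ∫ z, fderiv ℝ k z = 0 := by
  have translate := hasFDerivAt_integral_smul_translate k (h := fun _ => 1) continuous_const
    (B := 1) (by simp) 0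
  simp only [one_smul, integral_add_right_eq_self (k : E → F), add_zero] at translate
  exact translate.unique (hasFDerivAt_const _ _)

end SchwartzIntegrals

section Gaussian

open Nat in
lemma exists_one_add_pow_mul_exp_neg_mul_sq_le {b : ℝ} (hb : 0 < b) (n : ℕ) :
    ∃ C, ∀ t, 0 ≤ t → (1 + t) ^ n * Real.exp (-(b * t ^ 2)) ≤ C := by
  refine ⟨n ! / (2 * b) ^ n * Real.exp (3 * b), fun t ht => ?_⟩
  have hpow : (1 + t) ^ n ≤ n ! / (2 * b) ^ n * Real.exp (2 * b * (1 + t)) := by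
    have := Real.pow_div_factorial_le_exp (2 * b * (1 + t)) (by positivity) n
    rw [div_le_iff₀ (by positivity), mul_pow] at this
    rw [div_mul_eq_mul_div, le_div_iff₀ (by positivity)]
    linarith
  calc (1 + t) ^ n * Real.exp (-(b * t ^ 2))
      ≤ n ! / (2 * b) ^ n * Real.exp (2 * b * (1 + t)) * Real.exp (-(b * t ^ 2)) := by gcongr
    _ = n ! / (2 * b) ^ n * Real.exp (2 * b * (1 + t) - b * t ^ 2) := by
      rw [mul_assoc, ← Real.exp_add, sub_eq_add_neg]
    _ ≤ n ! / (2 * b) ^ n * Real.exp (3 * b) := by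
      gcongr
      nlinarith [mul_nonneg hb.le (sq_nonneg (t - 1))]

variable {E : Type*} [NormedAddCommGroup E] [InnerProductSpace ℝ E]

open Nat in
lemma norm_iteratedFDeriv_exp_neg_mul_norm_sq_le {b : ℝ} (hb : 0 ≤ b) (n : ℕ) :
    ∃ (C : ℝ) (k : ℕ), 0 ≤ C ∧ ∀ x : E,
      ‖iteratedFDeriv ℝ n (fun x : E => Real.exp (-(b * ‖x‖ ^ 2))) x‖ ≤
        C * (1 + ‖x‖) ^ k * Real.exp (-(b * ‖x‖ ^ 2)) := by
  obtain ⟨k, C, hC, hbound⟩ :=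
    (Function.hasTemperateGrowth_norm_sq (H := E)).norm_iteratedFDeriv_le_uniform n
  refine ⟨n ! * (1 + b) ^ n * (1 + C) ^ n, k * n, by positivity, fun x => ?_⟩
  have outer (i : ℕ) (hi : i ≤ n) :
      ‖iteratedFDeriv ℝ i (fun t => Real.exp (-b * t)) (‖x‖ ^ 2)‖ ≤
        (1 + b) ^ n * Real.exp (-(b * ‖x‖ ^ 2)) := by
    rw [norm_iteratedFDeriv_eq_norm_iteratedDeriv, iteratedDeriv_exp_const_mul, norm_mul, norm_pow,
      norm_neg, Real.norm_of_nonneg hb, Real.norm_of_nonneg (Real.exp_pos _).le, neg_mul]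
    gcongr
    calc b ^ i ≤ (1 + b) ^ i := by gcongr; linarith
      _ ≤ (1 + b) ^ n := by gcongr; linarith
  have inner (i : ℕ) (hi : 1 ≤ i) (hin : i ≤ n) :
      ‖iteratedFDeriv ℝ i (fun x : E => ‖x‖ ^ 2) x‖ ≤ ((1 + C) * (1 + ‖x‖) ^ k) ^ i := by
    have hD : 1 ≤ (1 + C) * (1 + ‖x‖) ^ k :=
      one_le_mul_of_one_le_of_one_le (by linarith) (one_le_pow₀ (by linarith [norm_nonneg x]))
    refine (hbound i hin x).trans (le_trans ?_ (le_self_pow₀ hD (by lia)))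
    gcongr
    linarith
  have := norm_iteratedFDeriv_comp_le (by fun_prop : ContDiff ℝ n fun t => Real.exp (-b * t))
    (contDiff_norm_sq ℝ) le_rfl x outer inner
  simp only [Function.comp_def, neg_mul] at this
  refine this.trans_eq ?_
  rw [mul_pow, ← pow_mul]
  ring

lemma exists_norm_pow_mul_norm_iteratedFDeriv_exp_neg_mul_norm_sq_le {b : ℝ} (hb : 0 < b)
    (m n : ℕ) : ∃ C, ∀ x : E,
      ‖x‖ ^ m * ‖iteratedFDeriv ℝ n (fun x : E => Real.exp (-(b * ‖x‖ ^ 2))) x‖ ≤ C := by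
  obtain ⟨C, k, hC, hderiv⟩ := norm_iteratedFDeriv_exp_neg_mul_norm_sq_le (E := E) hb.le n
  obtain ⟨C', hexp⟩ := exists_one_add_pow_mul_exp_neg_mul_sq_le hb (m + k)
  refine ⟨C * C', fun x => ?_⟩
  calc ‖x‖ ^ m * ‖iteratedFDeriv ℝ n (fun x : E => Real.exp (-(b * ‖x‖ ^ 2))) x‖
      ≤ (1 + ‖x‖) ^ m * (C * (1 + ‖x‖) ^ k * Real.exp (-(b * ‖x‖ ^ 2))) := by
        gcongr
        · linarith
        · exact hderiv x
    _ = C * ((1 + ‖x‖) ^ (m + k) * Real.exp (-(b * ‖x‖ ^ 2))) := by ring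
    _ ≤ C * C' := mul_le_mul_of_nonneg_left (hexp _ (norm_nonneg x)) hC

variable [FiniteDimensional ℝ E] [MeasurableSpace E] [BorelSpace E]

variable (E) in
/-- The standard Gaussian density `(2π)^{-n/2} e^{-|z|²/2}`, as a Schwartz function; the constant is
left as the reciprocal of the total mass. -/
def gaussian : 𝓢(E, ℝ) :=
  (∫ z : E, Real.exp (-(1 / 2 * ‖z‖ ^ 2)))⁻¹ •
    { toFun := fun z => Real.exp (-(1 / 2 * ‖z‖ ^ 2))
      smooth' := (contDiff_const.mul (contDiff_norm_sq ℝ)).neg.exp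
      decay' := exists_norm_pow_mul_norm_iteratedFDeriv_exp_neg_mul_norm_sq_le (by norm_num) }

lemma gaussian_apply (z : E) : gaussian E z =
    (∫ z : E, Real.exp (-(1 / 2 * ‖z‖ ^ 2)))⁻¹ * Real.exp (-(1 / 2 * ‖z‖ ^ 2)) := rfl

lemma integral_exp_neg_half_norm_sq_pos : 0 < ∫ z : E, Real.exp (-(1 / 2 * ‖z‖ ^ 2)) := by
  have := GaussianFourier.integral_rexp_neg_mul_sq_norm (V := E) (b := 1 / 2) (by norm_num)
  simp only [neg_mul] at this
  rw [this]
  positivity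

lemma gaussian_pos (z : E) : 0 < gaussian E z :=
  mul_pos (inv_pos.2 integral_exp_neg_half_norm_sq_pos) (Real.exp_pos _)

lemma integral_gaussian_eq_one : ∫ z, gaussian E z = 1 := by
  simp only [gaussian_apply, integral_const_mul]
  exact inv_mul_cancel₀ integral_exp_neg_half_norm_sq_pos.ne'

lemma fderiv_gaussian (z : E) : fderiv ℝ (gaussian E) z = -(gaussian E z) • innerSL ℝ z := by
  have := ((hasStrictFDerivAt_norm_sq z).hasFDerivAt.const_mul (1 / 2)).neg.exp.const_mul
    (∫ z : E, Real.exp (-(1 / 2 * ‖z‖ ^ 2)))⁻¹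
  refine (this.congr_fderiv ?_).fderiv
  ext v
  simp only [one_div, Pi.neg_apply, smul_neg, neg_apply, smul_apply, coe_innerSL_apply,
      nsmul_eq_mul, Nat.cast_ofNat, smul_eq_mul, ne_eq, OfNat.ofNat_ne_zero, not_false_eq_true,
      inv_mul_cancel_left₀, gaussian_apply, neg_smul, neg_inj]
  ring

lemma fderiv_fderiv_gaussian (z v w : E) : fderiv ℝ (fderiv ℝ (gaussian E)) z v w =
    gaussian E z * (inner ℝ z v * inner ℝ z w - inner ℝ v w) := by
  rw [funext fderiv_gaussian]
  have := (gaussian E).hasFDerivAt z |>.fun_neg.fun_smul (innerSL ℝ (E := E)).hasFDerivAt (x := z)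
  rw [this.fderiv, fderiv_gaussian]
  change -(gaussian E z) * inner ℝ v w + -(-(gaussian E z) * inner ℝ z v) * inner ℝ z w = _
  ring

end Gaussian

section Trace

variable {E F : Type*} [NormedAddCommGroup E] [InnerProductSpace ℝ E] [FiniteDimensional ℝ E]
  [NormedAddCommGroup F] [NormedSpace ℝ F]

lemma laplacian_eq_sum_fderiv_fderiv {ι : Type*} [Fintype ι] (v : OrthonormalBasis ι ℝ E)
    (u : E → F) (x : E) : Δ u x = ∑ i, fderiv ℝ (fderiv ℝ u) x (v i) (v i) := by
  simp [InnerProductSpace.laplacian_eq_iteratedFDeriv_orthonormalBasis u v,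
    iteratedFDeriv_two_apply]

variable (E) in
/-- The trace of a bilinear form on a Euclidean space, as a continuous linear functional. -/
def bilinTrace : (E →L[ℝ] E →L[ℝ] ℝ) →L[ℝ] ℝ :=
  ∑ i, ContinuousLinearMap.apply ℝ ℝ (stdOrthonormalBasis ℝ E i) ∘L
    ContinuousLinearMap.apply ℝ (E →L[ℝ] ℝ) (stdOrthonormalBasis ℝ E i)

lemma bilinTrace_fderiv_fderiv (u : E → ℝ) (x : E) :
    bilinTrace E (fderiv ℝ (fderiv ℝ u) x) = Δ u x := by
  simp [bilinTrace, laplacian_eq_sum_fderiv_fderiv (stdOrthonormalBasis ℝ E)]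

lemma laplacian_gaussian [MeasurableSpace E] [BorelSpace E] (z : E) : Δ (gaussian E : E → ℝ) z =
    -(Module.finrank ℝ E • gaussian E z + fderiv ℝ (gaussian E) z z) := by
  have trace : ∑ i, inner ℝ z (stdOrthonormalBasis ℝ E i) * inner ℝ z (stdOrthonormalBasis ℝ E i) =
      inner ℝ z z := by
    simpa [real_inner_comm] using (stdOrthonormalBasis ℝ E).sum_inner_mul_inner z z
  simp only [laplacian_eq_sum_fderiv_fderiv (stdOrthonormalBasis ℝ E), fderiv_fderiv_gaussian,
    ← Finset.mul_sum, Finset.sum_sub_distrib, trace]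
  simp only [inner_self_eq_norm_sq_to_K, Real.ringHom_apply, OrthonormalBasis.norm_eq_one,
      one_pow, Finset.sum_const, Finset.card_univ, Fintype.card_fin, nsmul_eq_mul, mul_one,
      fderiv_gaussian, neg_smul, neg_apply, smul_apply, coe_innerSL_apply, smul_eq_mul,
      neg_add_rev, neg_neg]
  ring

end Trace

section ScaleIntegral

variable {E F : Type*} [NormedAddCommGroup E] [NormedSpace ℝ E] [MeasureSpace E]
  [NormedAddCommGroup F] [NormedSpace ℝ F] {h : E → ℝ} {B D b p β : ℝ}

/-- The superposition `∫₀^∞ s ^ p e^{-b s²} (k_s * h) ds` of the convolutions of `h` with the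
dilations `k_s` of the kernel `k`. -/
def scaleIntegral (b p : ℝ) (k : E → F) (h : E → ℝ) (x : E) : F :=
  ∫ s in Ioi (0 : ℝ), (s ^ p * Real.exp (-b * s ^ 2)) • dilConv k h s x

lemma norm_smul_dilConv_le {k : E → F} {s : ℝ} (hs : 0 < s) {x : E}
    (hD : ‖dilConv k h s x‖ ≤ D * s ^ β) :
    ‖(s ^ p * Real.exp (-b * s ^ 2)) • dilConv k h s x‖ ≤
      D * (s ^ (p + β) * Real.exp (-b * s ^ 2)) := by
  rw [norm_smul, Real.norm_of_nonneg (by positivity)]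
  calc s ^ p * Real.exp (-b * s ^ 2) * ‖dilConv k h s x‖
      ≤ s ^ p * Real.exp (-b * s ^ 2) * (D * s ^ β) := by gcongr
    _ = D * (s ^ (p + β) * Real.exp (-b * s ^ 2)) := by rw [Real.rpow_add hs]; ring

lemma norm_scaleIntegral_le {k : E → F} (hb : 0 < b) (hp : -1 < p + β)
    (hD : ∀ s, 0 < s → ∀ x, ‖dilConv k h s x‖ ≤ D * s ^ β) (x : E) :
    ‖scaleIntegral b p k h x‖ ≤
      D * ∫ s in Ioi (0 : ℝ), s ^ (p + β) * Real.exp (-b * s ^ 2) := by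
  rw [← integral_const_mul]
  exact norm_integral_le_of_norm_le ((integrableOn_rpow_mul_exp_neg_mul_sq hb hp).const_mul D)
    ((ae_restrict_mem measurableSet_Ioi).mono fun s hs => norm_smul_dilConv_le hs (hD s hs x))

variable [BorelSpace E]

lemma aestronglyMeasurable_smul_dilConv {k : E → F} (hk : Integrable k) (hh : Continuous h)
    (hB : ∀ x, |h x| ≤ B) (b p : ℝ) (μ : Measure ℝ) (x : E) :
    AEStronglyMeasurable (fun s => (s ^ p * Real.exp (-b * s ^ 2)) • dilConv k h s x) μ :=
  (by fun_prop : Measurable fun s : ℝ => s ^ p * Real.exp (-b * s ^ 2)).aestronglyMeasurable.smul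
    ((continuous_dilConv hk hh hB).comp (Continuous.prodMk_left x)).aestronglyMeasurable

lemma integrableOn_smul_dilConv {k : E → F} (hb : 0 < b) (hp : -1 < p + β) (hk : Integrable k)
    (hh : Continuous h) (hB : ∀ x, |h x| ≤ B)
    (hD : ∀ s, 0 < s → ∀ x, ‖dilConv k h s x‖ ≤ D * s ^ β) (x : E) :
    IntegrableOn (fun s => (s ^ p * Real.exp (-b * s ^ 2)) • dilConv k h s x) (Ioi 0) :=
  ((integrableOn_rpow_mul_exp_neg_mul_sq hb hp).const_mul D).mono'
    (aestronglyMeasurable_smul_dilConv hk hh hB b p _ x)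
    ((ae_restrict_mem measurableSet_Ioi).mono fun s hs => norm_smul_dilConv_le hs (hD s hs x))

lemma continuous_scaleIntegral {k : E → F} (hb : 0 < b) (hp : -1 < p + β) (hk : Integrable k)
    (hh : Continuous h) (hB : ∀ x, |h x| ≤ B)
    (hD : ∀ s, 0 < s → ∀ x, ‖dilConv k h s x‖ ≤ D * s ^ β) :
    Continuous (scaleIntegral b p k h) :=
  continuous_of_dominated (fun x => aestronglyMeasurable_smul_dilConv hk hh hB b p _ x)
    (fun x => (ae_restrict_mem measurableSet_Ioi).mono fun s hs =>
      norm_smul_dilConv_le hs (hD s hs x))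
    ((integrableOn_rpow_mul_exp_neg_mul_sq hb hp).const_mul D)
    (Eventually.of_forall fun s =>
      ((continuous_dilConv hk hh hB).comp (Continuous.prodMk_right s)).const_smul _)

lemma clm_scaleIntegral [CompleteSpace F] {G : Type*} [NormedAddCommGroup G] [NormedSpace ℝ G]
    [CompleteSpace G] (L : F →L[ℝ] G) {k : E → F} (hb : 0 < b) (hp : -1 < p + β)
    (hk : Integrable k) (hh : Continuous h) (hB : ∀ x, |h x| ≤ B)
    (hD : ∀ s, 0 < s → ∀ x, ‖dilConv k h s x‖ ≤ D * s ^ β) (x : E) :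
    L (scaleIntegral b p k h x) = scaleIntegral b p (fun z => L (k z)) h x := by
  rw [scaleIntegral, ← L.integral_comp_comm (integrableOn_smul_dilConv hb hp hk hh hB hD x)]
  simp only [map_smul, clm_dilConv L hk hh hB, scaleIntegral]

lemma hasFDerivAt_scaleIntegral [FiniteDimensional ℝ E] [(volume : Measure E).IsAddHaarMeasure]
    (k : 𝓢(E, F)) (hb : 0 < b) (hp₀ : -1 < p + 1) (hp : -1 < p + β) (hh : Continuous h)
    (hB : ∀ x, |h x| ≤ B) (hD : ∀ s, 0 < s → ∀ x, ‖dilConv (fderiv ℝ k) h s x‖ ≤ D * s ^ β)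
    (x : E) :
    HasFDerivAt (scaleIntegral b (p + 1) k h) (scaleIntegral b p (fderiv ℝ k) h x) x := by
  refine hasFDerivAt_integral_of_dominated_of_fderiv_le univ_mem
    (Eventually.of_forall fun x => aestronglyMeasurable_smul_dilConv k.integrable hh hB b _ _ x)
    (integrableOn_smul_dilConv (β := 0) hb (by simpa) k.integrable hh hB
      (fun s _ x => by simpa using norm_dilConv_le k.integrable hB s x) x)
    (aestronglyMeasurable_smul_dilConv (SchwartzMap.fderivCLM ℝ E F k).integrable hh hB b p _ x)
    ((ae_restrict_mem measurableSet_Ioi).mono fun s hs x _ => norm_smul_dilConv_le hs (hD s hs x))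
    ((integrableOn_rpow_mul_exp_neg_mul_sq hb hp).const_mul D)
    ((ae_restrict_mem measurableSet_Ioi).mono fun s (hs : 0 < s) x _ => ?_)
  refine ((hasFDerivAt_dilConv k hh hB hs.ne' x).const_smul _).congr_fderiv ?_
  rw [smul_smul, Real.rpow_add_one hs.ne']
  congr 1
  field_simp

end ScaleIntegral

section Resolvent

variable {E : Type*} [NormedAddCommGroup E] [InnerProductSpace ℝ E] [FiniteDimensional ℝ E]
  [MeasurableSpace E] [BorelSpace E] {h : E → ℝ} {B K : ℝ} {C β : ℝ≥0}

/-- The resolvent `(K - Δ)⁻¹ h`, for `K > 0` and bounded `h`. It is written as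
`∫₀^∞ s e^{-K s²/2} (γ_s * h) ds`, where `γ_s` is the centred Gaussian of variance `s²`, that is
`∫₀^∞ e^{-K t} e^{tΔ} h dt` with `t = s² / 2`. -/
def lapResolvent (K : ℝ) (h : E → ℝ) (x : E) : ℝ := scaleIntegral (K / 2) 1 (gaussian E) h x

lemma hasFDerivAt_lapResolvent (hK : 0 < K) (hh : Continuous h) (hB : ∀ x, |h x| ≤ B) (x : E) :
    HasFDerivAt (lapResolvent K h) (scaleIntegral (K / 2) 0 (fderiv ℝ (gaussian E)) h x) x := by
  have := hasFDerivAt_scaleIntegral (p := 0) (β := 0) (gaussian E) (half_pos hK) (by norm_num)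
    (by norm_num) hh hB (fun s _ x => by
      simpa using norm_dilConv_le (integrable_fderiv (gaussian E)) hB s x) x
  rwa [zero_add] at this

variable (E) in
lemma exists_lipschitzWith_lapResolvent (hK : 0 < K) (B : ℝ) :
    ∃ L : ℝ≥0, ∀ h : E → ℝ, Continuous h → (∀ x, |h x| ≤ B) →
      LipschitzWith L (lapResolvent K h) := by
  refine ⟨Real.toNNReal ((B * ∫ z, ‖fderiv ℝ (gaussian E) z‖) *
    ∫ s in Ioi (0 : ℝ), s ^ ((0 : ℝ) + 0) * Real.exp (-(K / 2) * s ^ 2)), fun h hh hB => ?_⟩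
  refine lipschitzWith_of_nnnorm_fderiv_le (𝕜 := ℝ)
    (fun x => (hasFDerivAt_lapResolvent hK hh hB x).differentiableAt) fun x => ?_
  rw [(hasFDerivAt_lapResolvent hK hh hB x).fderiv, ← NNReal.coe_le_coe, coe_nnnorm]
  exact (norm_scaleIntegral_le (β := 0) (half_pos hK) (by norm_num) (fun s _ x => by
    simpa using norm_dilConv_le (integrable_fderiv (gaussian E)) hB s x)
      x).trans (Real.le_coe_toNNReal _)

lemma exists_norm_dilConv_fderiv_fderiv_gaussian_le (hβ : 0 < β) (hh : HolderWith C β h)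
    (hB : ∀ x, |h x| ≤ B) : ∃ D : ℝ, ∀ s, 0 < s → ∀ x,
      ‖dilConv (fderiv ℝ (fderiv ℝ (gaussian E))) h s x‖ ≤ D * s ^ (β : ℝ) :=
  let k₁ := SchwartzMap.fderivCLM ℝ E ℝ (gaussian E)
  let k₂ := SchwartzMap.fderivCLM ℝ E (E →L[ℝ] ℝ) k₁
  ⟨_, fun _ hs x => norm_dilConv_le_of_holderWith hβ k₂.integrable (integral_fderiv_eq_zero k₁)
    (integrable_norm_rpow_mul k₂ β.coe_nonneg) hh hB hs.le x⟩

lemma hasFDerivAt_fderiv_lapResolvent (hK : 0 < K) (hβ : 0 < β) (hh : HolderWith C β h)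
    (hB : ∀ x, |h x| ≤ B) (x : E) : HasFDerivAt (fderiv ℝ (lapResolvent K h))
      (scaleIntegral (K / 2) (-1) (fderiv ℝ (fderiv ℝ (gaussian E))) h x) x := by
  obtain ⟨D, hD⟩ := exists_norm_dilConv_fderiv_fderiv_gaussian_le hβ hh hB
  rw [funext fun x => (hasFDerivAt_lapResolvent hK (hh.continuous hβ) hB x).fderiv]
  have := hasFDerivAt_scaleIntegral (p := -1) (SchwartzMap.fderivCLM ℝ E ℝ (gaussian E))
    (half_pos hK) (by norm_num) (by simpa) (hh.continuous hβ) hB hD x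
  rwa [neg_add_cancel] at this

lemma contDiff_two_lapResolvent (hK : 0 < K) (hβ : 0 < β) (hh : HolderWith C β h)
    (hB : ∀ x, |h x| ≤ B) : ContDiff ℝ 2 (lapResolvent K h) := by
  obtain ⟨D, hD⟩ := exists_norm_dilConv_fderiv_fderiv_gaussian_le hβ hh hB
  have hcont : Continuous (scaleIntegral (K / 2) (-1) (fderiv ℝ (fderiv ℝ (gaussian E))) h) :=
    continuous_scaleIntegral (half_pos hK) (by simpa)
      (integrable_fderiv_fderiv (gaussian E)) (hh.continuous hβ) hB hD
  refine (contDiff_succ_iff_hasFDerivAt (n := 1)).2 ⟨fderiv ℝ (lapResolvent K h), ?_, fun x =>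
    (hasFDerivAt_lapResolvent hK (hh.continuous hβ) hB x).differentiableAt.hasFDerivAt⟩
  exact contDiff_one_iff_hasFDerivAt.2 ⟨_, hcont, hasFDerivAt_fderiv_lapResolvent hK hβ hh hB⟩

lemma hasDerivAt_dilConv_gaussian (hh : Continuous h) (hB : ∀ x, |h x| ≤ B) (x : E) {s : ℝ}
    (hs : 0 < s) : HasDerivAt (fun s => dilConv (gaussian E) h s x)
      (s⁻¹ * dilConv (Δ (gaussian E : E → ℝ)) h s x) s := by
  refine (hasDerivAt_dilConv_scale (gaussian E) hh hB x hs).congr_deriv ?_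
  have hγ := (integrable_dilConv_integrand (gaussian E).integrable hh hB s x).const_mul
    (Module.finrank ℝ E : ℝ)
  have hΔ := integrable_dilConv_integrand (Δ (gaussian E)).integrable hh hB s x
  simp only [SchwartzMap.laplacian_apply] at hΔ
  have radial (z : E) : h (x - s • z) • fderiv ℝ (gaussian E) z z =
      -(Module.finrank ℝ E * (h (x - s • z) • gaussian E z)) -
        h (x - s • z) • Δ (gaussian E : E → ℝ) z := by
    simp only [laplacian_gaussian, smul_eq_mul, nsmul_eq_mul]
    ring
  have hsplit : dilConv (fun z => fderiv ℝ (gaussian E) z z) h s x =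
      -(Module.finrank ℝ E * dilConv (gaussian E) h s x) -
        dilConv (Δ (gaussian E : E → ℝ)) h s x := by
    have := integral_sub hγ.neg hΔ
    simp only [Pi.neg_apply, integral_neg, integral_const_mul] at this
    simpa only [dilConv, radial] using this
  rw [hsplit, nsmul_eq_mul, smul_eq_mul]
  ring

lemma laplacian_lapResolvent_eq_scaleIntegral (hK : 0 < K) (hβ : 0 < β) (hh : HolderWith C β h)
    (hB : ∀ x, |h x| ≤ B) (x : E) :
    Δ (lapResolvent K h) x = scaleIntegral (K / 2) (-1) (Δ (gaussian E : E → ℝ)) h x := by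
  obtain ⟨D, hD⟩ := exists_norm_dilConv_fderiv_fderiv_gaussian_le hβ hh hB
  rw [← bilinTrace_fderiv_fderiv, (hasFDerivAt_fderiv_lapResolvent hK hβ hh hB x).fderiv,
    clm_scaleIntegral (bilinTrace E) (half_pos hK) (by simpa)
      (integrable_fderiv_fderiv (gaussian E)) (hh.continuous hβ) hB hD]
  simp only [bilinTrace_fderiv_fderiv]

set_option maxSynthPendingDepth 3 in
lemma integrableOn_laplacian_lapResolvent (hK : 0 < K) (hβ : 0 < β) (hh : HolderWith C β h)
    (hB : ∀ x, |h x| ≤ B) (x : E) :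
    IntegrableOn (fun s => (s ^ (-1 : ℝ) * Real.exp (-(K / 2) * s ^ 2)) •
      dilConv (Δ (gaussian E : E → ℝ)) h s x) (Ioi 0) := by
  obtain ⟨D, hD⟩ := exists_norm_dilConv_fderiv_fderiv_gaussian_le hβ hh hB
  have := (bilinTrace E).integrable_comp (integrableOn_smul_dilConv (p := -1) (half_pos hK)
    (by simpa) (integrable_fderiv_fderiv (gaussian E)) (hh.continuous hβ) hB hD x)
  simp only [map_smul, clm_dilConv (bilinTrace E) (integrable_fderiv_fderiv (gaussian E))
    (hh.continuous hβ) hB, bilinTrace_fderiv_fderiv] at this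
  exact this

lemma hasDerivAt_exp_neg_mul_sq (b s : ℝ) : HasDerivAt (fun s => Real.exp (-b * s ^ 2))
    (-(2 * b) * (s * Real.exp (-b * s ^ 2))) s := by
  refine ((hasDerivAt_pow 2 s).const_mul (-b)).exp.congr_deriv ?_
  push_cast
  ring

lemma tendsto_exp_neg_mul_sq {b : ℝ} (hb : 0 < b) :
    Tendsto (fun s => Real.exp (-b * s ^ 2)) atTop (𝓝 0) :=
  Real.tendsto_exp_atBot.comp
    ((tendsto_pow_atTop two_ne_zero).const_mul_atTop_of_neg (neg_lt_zero.2 hb))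

lemma dilConv_gaussian_zero (h : E → ℝ) (x : E) : dilConv (gaussian E) h 0 x = h x := by
  simp [dilConv, integral_const_mul, integral_gaussian_eq_one]

lemma integrableOn_lapResolvent (hK : 0 < K) (hh : Continuous h) (hB : ∀ x, |h x| ≤ B) (x : E) :
    IntegrableOn (fun s => (s ^ (1 : ℝ) * Real.exp (-(K / 2) * s ^ 2)) •
      dilConv (gaussian E) h s x) (Ioi 0) :=
  integrableOn_smul_dilConv (β := 0) (half_pos hK) (by norm_num) (gaussian E).integrable hh hB
    (fun s _ x => by simpa using norm_dilConv_le (gaussian E).integrable hB s x) x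

-- Integrate `d/ds (e^{-K s²/2} (γ_s * h)) = e^{-K s²/2} (s⁻¹ ((Δγ)_s * h) - K s (γ_s * h))`.
lemma laplacian_lapResolvent (hK : 0 < K) (hβ : 0 < β) (hh : HolderWith C β h)
    (hB : ∀ x, |h x| ≤ B) (x : E) :
    Δ (lapResolvent K h) x = K * lapResolvent K h x - h x := by
  have hcont := hh.continuous hβ
  have hγ := (integrableOn_lapResolvent hK hcont hB x).const_mul (-K)
  have hΔ := integrableOn_laplacian_lapResolvent hK hβ hh hB x
  have hf : Continuous fun s => Real.exp (-(K / 2) * s ^ 2) * dilConv (gaussian E) h s x := by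
    have := (continuous_dilConv (gaussian E).integrable hcont hB).comp (Continuous.prodMk_left x)
    exact (by fun_prop : Continuous fun s : ℝ => Real.exp (-(K / 2) * s ^ 2)).mul this
  have decay : Tendsto (fun s => Real.exp (-(K / 2) * s ^ 2) * dilConv (gaussian E) h s x)
      atTop (𝓝 0) :=
    (tendsto_exp_neg_mul_sq (half_pos hK)).zero_mul_isBoundedUnder_le
      (isBoundedUnder_of ⟨_, fun s => norm_dilConv_le (gaussian E).integrable hB s x⟩)
  have ftc := integral_Ioi_of_hasDerivAt_of_tendsto hf.continuousWithinAt (fun s hs => ?_)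
    (hγ.add hΔ) decay
  · simp only [Pi.add_apply] at ftc
    rw [integral_add hγ hΔ, integral_const_mul] at ftc
    rw [laplacian_lapResolvent_eq_scaleIntegral hK hβ hh hB x, scaleIntegral, lapResolvent,
      scaleIntegral]
    simp only [dilConv_gaussian_zero, zero_pow two_ne_zero, mul_zero, Real.exp_zero] at ftc
    linarith
  · refine ((hasDerivAt_exp_neg_mul_sq _ s).mul
      (hasDerivAt_dilConv_gaussian hcont hB x hs)).congr_deriv ?_
    simp only [Pi.add_apply, smul_eq_mul, Real.rpow_one, Real.rpow_neg_one]
    ring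

lemma integral_mul_exp_neg_half_mul_sq (hK : 0 < K) :
    ∫ s in Ioi (0 : ℝ), s * Real.exp (-(K / 2) * s ^ 2) = K⁻¹ := by
  have hint : IntegrableOn (fun s => s * Real.exp (-(K / 2) * s ^ 2)) (Ioi 0) := by
    simpa using integrableOn_rpow_mul_exp_neg_mul_sq (half_pos hK) (s := 1) (by norm_num)
  have ftc := integral_Ioi_of_hasDerivAt_of_tendsto
    (by fun_prop : Continuous fun s => Real.exp (-(K / 2) * s ^ 2)).continuousWithinAt
    (fun s _ => hasDerivAt_exp_neg_mul_sq (K / 2) s) (hint.const_mul _)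
    (tendsto_exp_neg_mul_sq (half_pos hK))
  rw [integral_const_mul, zero_pow two_ne_zero, mul_zero, Real.exp_zero] at ftc
  exact eq_inv_of_mul_eq_one_right (by linarith)

lemma lapResolvent_const (hK : 0 < K) (c : ℝ) (x : E) : lapResolvent K (fun _ => c) x = c / K := by
  have (s : ℝ) : dilConv (gaussian E) (fun _ => c) s x = c := by
    simp [dilConv, integral_const_mul, integral_gaussian_eq_one]
  simp only [lapResolvent, scaleIntegral, this, Real.rpow_one, smul_eq_mul]
  rw [integral_mul_const, integral_mul_exp_neg_half_mul_sq hK, inv_mul_eq_div]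

lemma lapResolvent_mono (hK : 0 < K) {g : E → ℝ} (hh : Continuous h) (hhB : ∀ x, |h x| ≤ B)
    (hg : Continuous g) (hgB : ∀ x, |g x| ≤ B) (hle : h ≤ g) (x : E) :
    lapResolvent K h x ≤ lapResolvent K g x := by
  refine setIntegral_mono_on (integrableOn_lapResolvent hK hh hhB x)
    (integrableOn_lapResolvent hK hg hgB x) measurableSet_Ioi fun s (hs : 0 < s) => ?_
  refine smul_le_smul_of_nonneg_left ?_ (by positivity)
  exact integral_mono (integrable_dilConv_integrand (gaussian E).integrable hh hhB s x)
    (integrable_dilConv_integrand (gaussian E).integrable hg hgB s x) fun z =>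
      smul_le_smul_of_nonneg_right (hle _) (gaussian_pos z).le

lemma dilConv_gaussian_pos (hh : Continuous h) (hB : ∀ x, |h x| ≤ B) (h₀ : 0 ≤ h) {x₁ : E}
    (h₁ : 0 < h x₁) {s : ℝ} (hs : s ≠ 0) (x : E) : 0 < dilConv (gaussian E) h s x := by
  refine integral_pos_of_integrable_nonneg_nonzero (x := s⁻¹ • (x - x₁)) ?_
    (integrable_dilConv_integrand (gaussian E).integrable hh hB s x)
    (fun z => smul_nonneg (h₀ _) (gaussian_pos z).le) ?_
  · have := (gaussian E).continuous
    fun_prop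
  · rw [smul_inv_smul₀ hs, sub_sub_cancel]
    exact (smul_pos h₁ (gaussian_pos _)).ne'

lemma lapResolvent_pos (hK : 0 < K) (hh : Continuous h) (hB : ∀ x, |h x| ≤ B) (h₀ : 0 ≤ h)
    {x₁ : E} (h₁ : 0 < h x₁) (x : E) : 0 < lapResolvent K h x := by
  have hpos (s : ℝ) (hs : 0 < s) : 0 < (s ^ (1 : ℝ) * Real.exp (-(K / 2) * s ^ 2)) •
      dilConv (gaussian E) h s x :=
    smul_pos (by positivity) (dilConv_gaussian_pos hh hB h₀ h₁ hs.ne' x)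
  rw [lapResolvent, scaleIntegral, setIntegral_pos_iff_support_of_nonneg_ae
    ((ae_restrict_mem measurableSet_Ioi).mono fun s hs => (hpos s hs).le)
    (integrableOn_lapResolvent hK hh hB x)]
  have hsupp : Ioi 0 ⊆ Function.support fun s : ℝ =>
      (s ^ (1 : ℝ) * Real.exp (-(K / 2) * s ^ 2)) • dilConv (gaussian E) h s x :=
    fun s hs => (hpos s hs).ne'
  rw [inter_eq_right.2 hsupp]
  simp

lemma tendsto_lapResolvent (hK : 0 < K) {g : ℕ → E → ℝ} (hg : ∀ n, Continuous (g n))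
    (hgB : ∀ n x, |g n x| ≤ B) (hlim : ∀ x, Tendsto (g · x) atTop (𝓝 (h x))) (x : E) :
    Tendsto (fun n => lapResolvent K (g n) x) atTop (𝓝 (lapResolvent K h x)) :=
  tendsto_integral_of_dominated_convergence _
    (fun n => (integrableOn_lapResolvent hK (hg n) (hgB n) x).aestronglyMeasurable)
    ((integrableOn_rpow_mul_exp_neg_mul_sq (half_pos hK) (by norm_num)).const_mul _)
    (fun n => (ae_restrict_mem measurableSet_Ioi).mono fun s hs =>
      norm_smul_dilConv_le (β := 0) hs (by
        simpa using norm_dilConv_le (gaussian E).integrable (hgB n) s x))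
    (Eventually.of_forall fun s =>
      (tendsto_dilConv (gaussian E).integrable hg hgB hlim s x).const_smul _)

end Resolvent

section Picone

variable {E : Type*} [NormedAddCommGroup E]

lemma hasCompactSupport_sq {φ : E → ℝ} (hφ : HasCompactSupport φ) :
    HasCompactSupport fun x => φ x ^ 2 :=
  hφ.comp_left (g := (· ^ 2)) (zero_pow two_ne_zero)

section NormedSpace

variable [NormedSpace ℝ E] {u φ : E → ℝ}

-- The defect of the inequality is the square of `∂φ - φ ∂u / u`.
lemma fderiv_sq_mul_fderiv_div_le (hu : ContDiff ℝ 2 u) {x : E} (hx : u x ≠ 0)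
    (hφ : DifferentiableAt ℝ φ x) (v : E) :
    fderiv ℝ (fun y => φ y ^ 2 * (fderiv ℝ u y v * (u y)⁻¹)) x v ≤
      fderiv ℝ φ x v ^ 2 + φ x ^ 2 * (fderiv ℝ (fderiv ℝ u) x v v / u x) := by
  have hu₁ := (hu.differentiable two_ne_zero x).hasFDerivAt
  have hu₂ := ((hu.fderiv_right (m := 1) (by norm_num)).differentiable one_ne_zero x).hasFDerivAt
  have hX := (hφ.hasFDerivAt.pow 2).fun_mul ((hu₂.clm_apply (hasFDerivAt_const v x)).fun_mul
    ((hasDerivAt_inv hx).comp_hasFDerivAt x hu₁))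
  have formula : fderiv ℝ (fun y => φ y ^ 2 * (fderiv ℝ u y v * (u y)⁻¹)) x v =
      fderiv ℝ φ x v ^ 2 + φ x ^ 2 * (fderiv ℝ (fderiv ℝ u) x v v / u x) -
        (fderiv ℝ φ x v - φ x * fderiv ℝ u x v / u x) ^ 2 := by
    refine (congrArg (· v) hX.fderiv).trans ?_
    simp only [neg_smul, smul_neg, Function.comp_apply, ContinuousLinearMap.comp_zero, zero_add,
      smul_add, Nat.add_one_sub_one, pow_one, nsmul_eq_mul, Nat.cast_ofNat, add_apply, neg_apply,
      smul_apply, smul_eq_mul, ContinuousLinearMap.flip_apply]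
    field_simp
    ring
  rw [formula]
  exact sub_le_self _ (sq_nonneg _)

variable [MeasureSpace E] [BorelSpace E] [(volume : Measure E).IsAddHaarMeasure]

lemma integrable_fderiv_apply (hφ : ContDiff ℝ 1 φ) (hc : HasCompactSupport φ) (v : E) :
    Integrable fun x => fderiv ℝ φ x v :=
  ((hφ.continuous_fderiv one_ne_zero).clm_apply continuous_const).integrable_of_hasCompactSupport
    (hc.fderiv_apply ℝ v)

lemma integrable_fderiv_apply_sq (hφ : ContDiff ℝ 1 φ) (hc : HasCompactSupport φ) (v : E) :
    Integrable fun x => fderiv ℝ φ x v ^ 2 :=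
  have hcont := ((hφ.continuous_fderiv one_ne_zero).clm_apply (continuous_const (y := v))).pow 2
  hcont.integrable_of_hasCompactSupport (hasCompactSupport_sq (hc.fderiv_apply ℝ v))

lemma integrable_sq_mul_fderiv_fderiv_div (hu : ContDiff ℝ 2 u) (hu₀ : ∀ x, u x ≠ 0)
    (hφ : Continuous φ) (hc : HasCompactSupport φ) (v : E) :
    Integrable fun x => φ x ^ 2 * (fderiv ℝ (fderiv ℝ u) x v v / u x) := by
  have hu₂ : Continuous fun x => fderiv ℝ (fderiv ℝ u) x v v :=
    ((hu.fderiv_right (m := 1) (by norm_num)).continuous_fderiv one_ne_zero).clm_apply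
      continuous_const |>.clm_apply continuous_const
  exact ((hφ.pow 2).mul (hu₂.div hu.continuous hu₀)).integrable_of_hasCompactSupport
    (hasCompactSupport_sq hc).mul_right

variable [FiniteDimensional ℝ E]

lemma integral_fderiv_apply_eq_zero (hφ : ContDiff ℝ 1 φ) (hc : HasCompactSupport φ)
    (v : E) : ∫ x, fderiv ℝ φ x v = 0 := by
  simpa using integral_mul_fderiv_eq_neg_fderiv_mul_of_integrable (μ := volume) (f := φ)
    (g := fun _ => (1 : ℝ)) (v := v) (by simpa using integrable_fderiv_apply hφ hc v) (by simp)
    (by simpa using hφ.continuous.integrable_of_hasCompactSupport hc)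
    (fun x _ => hφ.differentiable one_ne_zero x) (fun x _ => differentiableAt_const _)

lemma integral_fderiv_sq_add_sq_mul_fderiv_fderiv_div_nonneg (hu : ContDiff ℝ 2 u)
    (hu₀ : ∀ x, u x ≠ 0) (hφ : ContDiff ℝ 1 φ) (hc : HasCompactSupport φ) (v : E) :
    0 ≤ ∫ x, (fderiv ℝ φ x v ^ 2 + φ x ^ 2 * (fderiv ℝ (fderiv ℝ u) x v v / u x)) := by
  have hX : ContDiff ℝ 1 fun y => φ y ^ 2 * (fderiv ℝ u y v * (u y)⁻¹) :=
    (hφ.pow 2).mul (((hu.fderiv_right (m := 1) (by norm_num)).clm_apply contDiff_const).mul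
      ((hu.of_le (by norm_num)).inv hu₀))
  have hXc : HasCompactSupport fun y => φ y ^ 2 * (fderiv ℝ u y v * (u y)⁻¹) :=
    (hasCompactSupport_sq hc).mul_right
  rw [← integral_fderiv_apply_eq_zero hX hXc v]
  exact integral_mono (integrable_fderiv_apply hX hXc v)
    ((integrable_fderiv_apply_sq hφ hc v).add
      (integrable_sq_mul_fderiv_fderiv_div hu hu₀ hφ.continuous hc v))
    fun x => fderiv_sq_mul_fderiv_div_le hu (hu₀ x) (hφ.differentiable one_ne_zero x) v

end NormedSpace

variable [InnerProductSpace ℝ E] [FiniteDimensional ℝ E] {u φ : E → ℝ}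

lemma norm_gradient_sq {ι : Type*} [Fintype ι] (v : OrthonormalBasis ι ℝ E) (φ : E → ℝ) (x : E) :
    ‖gradient φ x‖ ^ 2 = ∑ i, fderiv ℝ φ x (v i) ^ 2 := by
  rw [← v.sum_sq_inner_left]
  simp only [gradient, InnerProductSpace.toDual_symm_apply]

variable [MeasurableSpace E] [BorelSpace E]

lemma integral_sq_mul_neg_laplacian_div_le (hu : ContDiff ℝ 2 u) (hu₀ : ∀ x, u x ≠ 0)
    (hφ : ContDiff ℝ 1 φ) (hc : HasCompactSupport φ) :
    ∫ x, φ x ^ 2 * (-Δ u x / u x) ≤ ∫ x, ‖gradient φ x‖ ^ 2 := by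
  let v := stdOrthonormalBasis ℝ E
  have hgrad (i) := integrable_fderiv_apply_sq hφ hc (v i)
  have hlap (i) := integrable_sq_mul_fderiv_fderiv_div hu hu₀ hφ.continuous hc (v i)
  have split (x : E) : φ x ^ 2 * (-Δ u x / u x) =
      -∑ i, φ x ^ 2 * (fderiv ℝ (fderiv ℝ u) x (v i) (v i) / u x) := by
    rw [laplacian_eq_sum_fderiv_fderiv v, ← Finset.mul_sum, ← Finset.sum_div]
    ring
  simp only [split, norm_gradient_sq v]
  rw [integral_neg, integral_finsetSum _ fun i _ => hgrad i,
    integral_finsetSum _ fun i _ => hlap i, ← sub_nonneg, sub_neg_eq_add,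
    ← Finset.sum_add_distrib]
  refine Finset.sum_nonneg fun i _ => ?_
  rw [← integral_add (hgrad i) (hlap i)]
  exact integral_fderiv_sq_add_sq_mul_fderiv_fderiv_div_nonneg hu hu₀ hφ hc (v i)

end Picone

section PrincipalEigenvalue

lemma exists_contDiff_hasCompactSupport_integral_mul_sq_pos {E : Type*} [NormedAddCommGroup E]
    [NormedSpace ℝ E] [FiniteDimensional ℝ E] [MeasureSpace E] [BorelSpace E]
    [IsFiniteMeasureOnCompacts (volume : Measure E)] [(volume : Measure E).IsOpenPosMeasure]
    {V : E → ℝ} (hV : Continuous V) {x₀ : E} (hx₀ : 0 < V x₀) :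
    ∃ φ : E → ℝ, ContDiff ℝ (⊤ : ℕ∞) φ ∧ HasCompactSupport φ ∧ 0 < ∫ x, V x * φ x ^ 2 := by
  obtain ⟨ρ, hρ, hball⟩ := nhds_basis_ball.mem_iff.1 (hV.continuousAt.eventually (lt_mem_nhds hx₀))
  let b : ContDiffBump x₀ := ⟨ρ / 2, ρ, half_pos hρ, half_lt_self hρ⟩
  have hcont : Continuous fun x => V x * b x ^ 2 := hV.mul (b.continuous.pow 2)
  have hnonneg : 0 ≤ fun x => V x * b x ^ 2 := fun x => by
    by_cases hx : x ∈ ball x₀ ρ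
    · exact mul_nonneg (hball hx).le (sq_nonneg _)
    · simp [b.zero_of_le_dist (not_lt.1 hx)]
  refine ⟨b, b.contDiff, b.hasCompactSupport, integral_pos_of_integrable_nonneg_nonzero (x := x₀)
    hcont (hcont.integrable_of_hasCompactSupport
      (hasCompactSupport_sq b.hasCompactSupport).mul_left) hnonneg ?_⟩
  simp [b.one_of_mem_closedBall (mem_closedBall_self b.rIn_pos.le), hx₀.ne']

variable {N : ℕ} {V : Euc N → ℝ}

/-- The Dirichlet energies whose infimum is `lam1 N V R`. -/
def dirichletEnergies (N : ℕ) (V : Euc N → ℝ) (R : ℝ) : Set ℝ :=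
  {t | ∃ u : Euc N → ℝ, ContDiff ℝ (⊤ : ℕ∞) u ∧ HasCompactSupport u ∧ tsupport u ⊆ ball 0 R ∧
    (∫ x, V x * u x ^ 2) = 1 ∧ t = ∫ x, ‖gradient u x‖ ^ 2}

lemma nonneg_of_mem_dirichletEnergies {R t : ℝ} (ht : t ∈ dirichletEnergies N V R) : 0 ≤ t := by
  obtain ⟨u, -, -, -, -, rfl⟩ := ht
  positivity

lemma bddBelow_dirichletEnergies (R : ℝ) : BddBelow (dirichletEnergies N V R) :=
  ⟨0, fun _ => nonneg_of_mem_dirichletEnergies⟩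

lemma dirichletEnergies_mono : Monotone (dirichletEnergies N V) :=
  fun _ _ hR _ ⟨u, hu, hc, hs, hV, ht⟩ => ⟨u, hu, hc, hs.trans (ball_subset_ball hR), hV, ht⟩

lemma exists_nonempty_dirichletEnergies (hV : Continuous V) {x₀ : Euc N} (hx₀ : 0 < V x₀) :
    ∃ R, (dirichletEnergies N V R).Nonempty := by
  obtain ⟨φ, hφ, hc, hpos⟩ := exists_contDiff_hasCompactSupport_integral_mul_sq_pos hV hx₀
  let ψ : Euc N → ℝ := fun x => (√(∫ x, V x * φ x ^ 2))⁻¹ * φ x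
  have hψ : HasCompactSupport ψ := hc.mul_left
  obtain ⟨R, hR⟩ := hψ.isCompact.isBounded.subset_ball 0
  refine ⟨R, _, ψ, contDiff_const.mul hφ, hψ, hR, ?_, rfl⟩
  have scale (x : Euc N) : V x * ψ x ^ 2 = (∫ x, V x * φ x ^ 2)⁻¹ * (V x * φ x ^ 2) := by
    rw [mul_pow, inv_pow, Real.sq_sqrt hpos.le, mul_left_comm]
  simp only [scale, integral_const_mul, inv_mul_cancel₀ hpos.ne']

lemma lam1_nonneg (R : ℝ) : 0 ≤ lam1 N V R :=
  Real.sInf_nonneg fun _ => nonneg_of_mem_dirichletEnergies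

lemma tendsto_lam1 (hV : Continuous V) (hpos : ∃ x, 0 < V x) :
    Tendsto (lam1 N V) atTop (𝓝 (Lam N V)) := by
  obtain ⟨x₀, hx₀⟩ := hpos
  obtain ⟨R₀, hR₀⟩ := exists_nonempty_dirichletEnergies hV hx₀
  have hanti : Antitone fun R => lam1 N V (max R R₀) := fun R R' hR =>
    csInf_le_csInf (bddBelow_dirichletEnergies _)
      (hR₀.mono (dirichletEnergies_mono (le_max_right R R₀)))
      (dirichletEnergies_mono (max_le_max hR le_rfl))
  have hlim := (tendsto_atTop_ciInf hanti ⟨0, forall_mem_range.2 fun R => lam1_nonneg _⟩).congr'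
    ((eventually_ge_atTop R₀).mono fun R hR => by rw [max_eq_left hR])
  exact tendsto_nhds_limUnder ⟨_, hlim⟩

lemma Lam_nonneg (hV : Continuous V) (hpos : ∃ x, 0 < V x) : 0 ≤ Lam N V :=
  ge_of_tendsto' (tendsto_lam1 hV hpos) lam1_nonneg

lemma exists_integral_norm_gradient_sq_lt (hV : Continuous V) (hpos : ∃ x, 0 < V x) {lam : ℝ}
    (hlam : Lam N V < lam) : ∃ φ : Euc N → ℝ, ContDiff ℝ (⊤ : ℕ∞) φ ∧ HasCompactSupport φ ∧
      ∫ x, ‖gradient φ x‖ ^ 2 < lam * ∫ x, V x * φ x ^ 2 := by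
  obtain ⟨x₀, hx₀⟩ := hpos
  obtain ⟨R₀, hR₀⟩ := exists_nonempty_dirichletEnergies hV hx₀
  obtain ⟨R, hR, hR₀R⟩ := ((tendsto_lam1 hV ⟨x₀, hx₀⟩).eventually (gt_mem_nhds hlam) |>.and
    (eventually_ge_atTop R₀)).exists
  obtain ⟨t, ⟨φ, hφ, hc, -, hone, rfl⟩, ht⟩ :=
    exists_lt_of_csInf_lt (hR₀.mono (dirichletEnergies_mono hR₀R)) hR
  exact ⟨φ, hφ, hc, by rwa [hone, mul_one]⟩

end PrincipalEigenvalue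

section MonotoneIteration

/-- A nonlinearity `g x t` for which the constants `0` and `M` are a solution and a supersolution of
`-Δu = g(x, u)`: it is `L`-Lipschitz in `t ∈ [0, M]` and `β`-Hölder in `x`, uniformly in the other
variable. -/
structure IsReaction {E : Type*} [PseudoMetricSpace E] (g : E → ℝ → ℝ) (M : ℝ) (L C β : ℝ≥0) :
    Prop where
  pos : 0 < M
  exponent_pos : 0 < β
  exponent_le_one : β ≤ 1
  map_zero : ∀ x, g x 0 = 0
  map_top_nonpos : ∀ x, g x M ≤ 0
  lipschitzOnWith : ∀ x, LipschitzOnWith L (g x) (Icc 0 M)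
  holderWith : ∀ t ∈ Icc 0 M, HolderWith C β (g · t)

/-- The right-hand side of the equation `(L + 1) v - Δv = (L + 1) u + g(x, u)` which determines the
iterate `v` after `u`. The shift `L + 1` makes it increasing in `u`. -/
def shiftedReaction {E : Type*} (g : E → ℝ → ℝ) (L : ℝ≥0) (u : E → ℝ) (x : E) : ℝ :=
  (L + 1) * u x + g x (u x)

namespace IsReaction

variable {E : Type*} {g : E → ℝ → ℝ} {M : ℝ} {L C β : ℝ≥0} {u v : E → ℝ}

section PseudoMetricSpace

variable [PseudoMetricSpace E] (hg : IsReaction g M L C β)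

include hg

lemma abs_sub_le (x : E) {s t : ℝ} (hs : s ∈ Icc 0 M) (ht : t ∈ Icc 0 M) :
    |g x s - g x t| ≤ L * |s - t| :=
  (hg.lipschitzOnWith x).dist_le_mul s hs t ht

lemma add_sub_le (x : E) {s t : ℝ} (hs : s ∈ Icc 0 M) (ht : t ∈ Icc 0 M) (hst : s ≤ t) :
    (L + 1) * s + g x s + (t - s) ≤ (L + 1) * t + g x t := by
  have := hg.abs_sub_le x hs ht
  rw [abs_of_nonpos (sub_nonpos.2 hst)] at this
  linarith [le_abs_self (g x s - g x t)]

lemma zero_mem : 0 ∈ Icc 0 M := left_mem_Icc.2 hg.pos.le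

lemma top_mem : M ∈ Icc 0 M := right_mem_Icc.2 hg.pos.le

lemma le_shiftedReaction (hu : ∀ x, u x ∈ Icc 0 M) (x : E) : u x ≤ shiftedReaction g L u x := by
  have := hg.add_sub_le x hg.zero_mem (hu x) (hu x).1
  rwa [hg.map_zero, mul_zero, zero_add, zero_add, sub_zero] at this

lemma shiftedReaction_nonneg (hu : ∀ x, u x ∈ Icc 0 M) : 0 ≤ shiftedReaction g L u :=
  fun x => (hu x).1.trans (hg.le_shiftedReaction hu x)

lemma shiftedReaction_mono (hu : ∀ x, u x ∈ Icc 0 M) (hv : ∀ x, v x ∈ Icc 0 M) (huv : u ≤ v) :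
    shiftedReaction g L u ≤ shiftedReaction g L v := fun x =>
  (le_add_of_nonneg_right (sub_nonneg.2 (huv x))).trans (hg.add_sub_le x (hu x) (hv x) (huv x))

lemma shiftedReaction_le (hu : ∀ x, u x ∈ Icc 0 M) (x : E) :
    shiftedReaction g L u x ≤ (L + 1) * M :=
  (hg.shiftedReaction_mono (v := fun _ => M) hu (fun _ => hg.top_mem) (fun x => (hu x).2) x).trans
    (add_le_of_nonpos_right (hg.map_top_nonpos x))

lemma abs_shiftedReaction_le (hu : ∀ x, u x ∈ Icc 0 M) (x : E) :
    |shiftedReaction g L u x| ≤ (L + 1) * M := by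
  rw [abs_of_nonneg (hg.shiftedReaction_nonneg hu x)]
  exact hg.shiftedReaction_le hu x

lemma tendsto_shiftedReaction {w : ℕ → E → ℝ} (hw : ∀ n x, w n x ∈ Icc 0 M)
    (hlim : ∀ x, Tendsto (w · x) atTop (𝓝 (u x))) (x : E) :
    Tendsto (fun n => shiftedReaction g L (w n) x) atTop (𝓝 (shiftedReaction g L u x)) := by
  have hux : u x ∈ Icc 0 M := isClosed_Icc.mem_of_tendsto (hlim x) (Eventually.of_forall (hw · x))
  have := ((hg.lipschitzOnWith x).continuousOn _ hux).tendsto.comp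
    (tendsto_nhdsWithin_iff.2 ⟨hlim x, Eventually.of_forall (hw · x)⟩)
  exact ((hlim x).const_mul _).add this

lemma exists_holderWith_of_lipschitzWith {D : ℝ≥0} (hu : LipschitzWith D u)
    (hmem : ∀ x, u x ∈ Icc 0 M) : ∃ D', HolderWith D' β u := by
  have hbdd : HolderWith M.toNNReal 0 u := fun x y => by
    rw [NNReal.coe_zero, ENNReal.rpow_zero, mul_one, edist_dist]
    exact ENNReal.ofReal_le_ofReal
      ((Real.dist_le_of_mem_Icc (hmem x) (hmem y)).trans_eq (sub_zero M))
  exact ⟨_, hbdd.of_le_of_le (holderWith_one.2 hu) hg.exponent_pos.le hg.exponent_le_one⟩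

lemma exists_holderWith_shiftedReaction {D : ℝ≥0} (hu : LipschitzWith D u)
    (hmem : ∀ x, u x ∈ Icc 0 M) : ∃ D', HolderWith D' β (shiftedReaction g L u) := by
  obtain ⟨D', hD'⟩ := hg.exists_holderWith_of_lipschitzWith hu hmem
  have hgu : HolderWith (L * D' + C) β fun x => g x (u x) := fun x y => calc
    edist (g x (u x)) (g y (u y)) ≤ edist (g x (u x)) (g x (u y)) + edist (g x (u y)) (g y (u y)) :=
      edist_triangle _ _ _
    _ ≤ L * (D' * edist x y ^ (β : ℝ)) + C * edist x y ^ (β : ℝ) := by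
      gcongr
      · exact (hg.lipschitzOnWith x (hmem x) (hmem y)).trans (by gcongr; exact hD' x y)
      · exact hg.holderWith (u y) (hmem y) x y
    _ = ↑(L * D' + C) * edist x y ^ (β : ℝ) := by push_cast; ring
  exact ⟨_, (hD'.smul ((L : ℝ) + 1)).add hgu⟩

end PseudoMetricSpace

variable [NormedAddCommGroup E] [InnerProductSpace ℝ E] [FiniteDimensional ℝ E]
  [MeasurableSpace E] [BorelSpace E]

variable (g L M) in
/-- The monotone iteration `(L + 1) uₙ₊₁ - Δuₙ₊₁ = (L + 1) uₙ + g(x, uₙ)`, started at the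
supersolution `u₀ = M`. -/
def iterate : ℕ → E → ℝ
  | 0 => fun _ => M
  | n + 1 => lapResolvent (L + 1) (shiftedReaction g L (iterate n))

variable (hg : IsReaction g M L C β)

include hg

lemma lapResolvent_shiftedReaction_mem_Icc (hu : ∀ x, u x ∈ Icc 0 M)
    (hcont : Continuous (shiftedReaction g L u)) (x : E) :
    lapResolvent (L + 1) (shiftedReaction g L u) x ∈ Icc 0 M := by
  have hK : 0 < (L + 1 : ℝ) := by positivity
  have hKM : 0 ≤ (L + 1) * M := by have := hg.pos; positivity
  constructor
  · have := lapResolvent_mono hK (h := fun _ => 0) continuous_const (by simpa) hcont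
      (hg.abs_shiftedReaction_le hu) (hg.shiftedReaction_nonneg hu) x
    rwa [lapResolvent_const hK, zero_div] at this
  · have := lapResolvent_mono hK hcont (hg.abs_shiftedReaction_le hu) (g := fun _ => (L + 1) * M)
      continuous_const (fun _ => (abs_of_nonneg hKM).le) (hg.shiftedReaction_le hu) x
    rwa [lapResolvent_const hK, mul_div_cancel_left₀ _ hK.ne'] at this

lemma exists_lipschitzWith_iterate :
    ∃ D, ∀ n, LipschitzWith D (iterate g M L n) ∧ ∀ x, iterate g M L n x ∈ Icc 0 M := by
  obtain ⟨D, hD⟩ := exists_lipschitzWith_lapResolvent E (K := L + 1) (by positivity) ((L + 1) * M)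
  refine ⟨D, fun n => ?_⟩
  induction n with
  | zero => exact ⟨(LipschitzWith.const M).weaken zero_le, fun _ => hg.top_mem⟩
  | succ n ih =>
    obtain ⟨D', hD'⟩ := hg.exists_holderWith_shiftedReaction ih.1 ih.2
    have hcont := hD'.continuous hg.exponent_pos
    exact ⟨hD _ hcont (hg.abs_shiftedReaction_le ih.2),
      hg.lapResolvent_shiftedReaction_mem_Icc ih.2 hcont⟩

lemma iterate_mem_Icc (n : ℕ) (x : E) : iterate g M L n x ∈ Icc 0 M :=
  let ⟨_, h⟩ := hg.exists_lipschitzWith_iterate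
  (h n).2 x

lemma continuous_iterate (n : ℕ) : Continuous (iterate g M L n) :=
  let ⟨_, h⟩ := hg.exists_lipschitzWith_iterate
  (h n).1.continuous

lemma exists_holderWith_shiftedReaction_iterate (n : ℕ) :
    ∃ D, HolderWith D β (shiftedReaction g L (iterate g M L n)) :=
  let ⟨_, h⟩ := hg.exists_lipschitzWith_iterate
  hg.exists_holderWith_shiftedReaction (h n).1 (h n).2

lemma continuous_shiftedReaction_iterate (n : ℕ) :
    Continuous (shiftedReaction g L (iterate g M L n)) :=
  let ⟨_, h⟩ := hg.exists_holderWith_shiftedReaction_iterate n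
  h.continuous hg.exponent_pos

lemma contDiff_iterate_succ (n : ℕ) : ContDiff ℝ 2 (iterate g M L (n + 1)) :=
  let ⟨_, h⟩ := hg.exists_holderWith_shiftedReaction_iterate n
  contDiff_two_lapResolvent (by positivity) hg.exponent_pos h
    (hg.abs_shiftedReaction_le (hg.iterate_mem_Icc n))

lemma laplacian_iterate_succ (n : ℕ) (x : E) : Δ (iterate g M L (n + 1)) x =
    (L + 1) * iterate g M L (n + 1) x - shiftedReaction g L (iterate g M L n) x :=
  let ⟨_, h⟩ := hg.exists_holderWith_shiftedReaction_iterate n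
  laplacian_lapResolvent (by positivity) hg.exponent_pos h
    (hg.abs_shiftedReaction_le (hg.iterate_mem_Icc n)) x

lemma iterate_pos (n : ℕ) (x : E) : 0 < iterate g M L n x := by
  induction n generalizing x with
  | zero => exact hg.pos
  | succ n ih =>
    have hmem := hg.iterate_mem_Icc n
    exact lapResolvent_pos (by positivity) (hg.continuous_shiftedReaction_iterate n)
      (hg.abs_shiftedReaction_le hmem) (hg.shiftedReaction_nonneg hmem)
      ((ih 0).trans_le (hg.le_shiftedReaction hmem 0)) x

lemma iterate_succ_le (n : ℕ) : iterate g M L (n + 1) ≤ iterate g M L n := by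
  induction n with
  | zero => exact fun x => (hg.iterate_mem_Icc 1 x).2
  | succ n ih =>
    have hmem := hg.iterate_mem_Icc
    exact lapResolvent_mono (by positivity) (hg.continuous_shiftedReaction_iterate (n + 1))
      (hg.abs_shiftedReaction_le (hmem (n + 1))) (hg.continuous_shiftedReaction_iterate n)
      (hg.abs_shiftedReaction_le (hmem n)) (hg.shiftedReaction_mono (hmem (n + 1)) (hmem n) ih)

lemma exists_tendsto_iterate :
    ∃ u : E → ℝ, ∀ x, Tendsto (iterate g M L · x) atTop (𝓝 (u x)) :=
  ⟨_, fun x => tendsto_atTop_ciInf (antitone_nat_of_succ_le fun n => hg.iterate_succ_le n x)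
    ⟨0, forall_mem_range.2 fun n => (hg.iterate_mem_Icc n x).1⟩⟩

lemma lapResolvent_shiftedReaction_of_tendsto_iterate
    (hu : ∀ x, Tendsto (iterate g M L · x) atTop (𝓝 (u x))) :
    lapResolvent (L + 1) (shiftedReaction g L u) = u := funext fun x =>
  tendsto_nhds_unique
    (tendsto_lapResolvent (by positivity) hg.continuous_shiftedReaction_iterate
      (fun n => hg.abs_shiftedReaction_le (hg.iterate_mem_Icc n))
      (hg.tendsto_shiftedReaction hg.iterate_mem_Icc hu) x)
    ((tendsto_add_atTop_iff_nat 1).2 (hu x))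

lemma exists_holderWith_shiftedReaction_of_tendsto_iterate
    (hu : ∀ x, Tendsto (iterate g M L · x) atTop (𝓝 (u x))) :
    ∃ D, HolderWith D β (shiftedReaction g L u) := by
  obtain ⟨D, hD⟩ := hg.exists_lipschitzWith_iterate
  exact hg.exists_holderWith_shiftedReaction
    ((isClosed_setOfPred_lipschitzWith D).mem_of_tendsto (tendsto_pi_nhds.2 hu)
      (Eventually.of_forall fun n => (hD n).1))
    fun x => isClosed_Icc.mem_of_tendsto (hu x) (Eventually.of_forall fun n => (hD n).2 x)

lemma continuous_iterate_div (n : ℕ) :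
    Continuous fun x => g x (iterate g M L n x) / iterate g M L n x := by
  have hcont := hg.continuous_iterate n
  refine Continuous.div ?_ hcont fun x => (hg.iterate_pos n x).ne'
  exact ((hg.continuous_shiftedReaction_iterate n).sub (hcont.const_mul (L + 1 : ℝ))).congr
    fun x => add_sub_cancel_left _ _

lemma map_iterate_div_le (n : ℕ) (x : E) : g x (iterate g M L n x) / iterate g M L n x ≤
    -Δ (iterate g M L (n + 1)) x / iterate g M L (n + 1) x := by
  have hpos := hg.iterate_pos n x
  have hpos' := hg.iterate_pos (n + 1) x
  have hle : shiftedReaction g L (iterate g M L n) x / iterate g M L n x ≤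
      shiftedReaction g L (iterate g M L n) x / iterate g M L (n + 1) x :=
    div_le_div_of_nonneg_left (hg.shiftedReaction_nonneg (hg.iterate_mem_Icc n) x) hpos'
      (hg.iterate_succ_le n x)
  rw [hg.laplacian_iterate_succ, neg_sub, sub_div, mul_div_cancel_right₀ _ hpos'.ne']
  have : shiftedReaction g L (iterate g M L n) x / iterate g M L n x =
      L + 1 + g x (iterate g M L n x) / iterate g M L n x := by
    rw [shiftedReaction, add_div, mul_div_cancel_right₀ _ hpos.ne']
  linarith

lemma integral_sq_mul_iterate_div_le {φ : E → ℝ} (hφ : ContDiff ℝ 1 φ) (hc : HasCompactSupport φ)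
    (n : ℕ) : ∫ x, φ x ^ 2 * (g x (iterate g M L n x) / iterate g M L n x) ≤
      ∫ x, ‖gradient φ x‖ ^ 2 := by
  have hu := hg.contDiff_iterate_succ n
  have hu₀ x := (hg.iterate_pos (n + 1) x).ne'
  have hlap : Continuous fun x => -Δ (iterate g M L (n + 1)) x / iterate g M L (n + 1) x := by
    refine Continuous.div ?_ hu.continuous hu₀
    simp only [hg.laplacian_iterate_succ]
    exact ((hu.continuous.const_mul _).sub (hg.continuous_shiftedReaction_iterate n)).neg
  have hsq := hφ.continuous.pow 2
  refine (integral_mono ?_ ?_ fun x => ?_).trans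
    (integral_sq_mul_neg_laplacian_div_le hu hu₀ hφ hc)
  · exact (hsq.mul (hg.continuous_iterate_div n)).integrable_of_hasCompactSupport
      (hasCompactSupport_sq hc).mul_right
  · exact (hsq.mul hlap).integrable_of_hasCompactSupport (hasCompactSupport_sq hc).mul_right
  · exact mul_le_mul_of_nonneg_left (hg.map_iterate_div_le n x) (sq_nonneg _)

lemma integral_sq_mul_slope_le {a φ : E → ℝ}
    (ha : ∀ x, Tendsto (fun t => g x t / t) (𝓝[>] 0) (𝓝 (a x)))
    (hzero : ∀ x, Tendsto (iterate g M L · x) atTop (𝓝 0)) (hφ : ContDiff ℝ 1 φ)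
    (hc : HasCompactSupport φ) : ∫ x, φ x ^ 2 * a x ≤ ∫ x, ‖gradient φ x‖ ^ 2 := by
  have hsq := hφ.continuous.pow 2
  have bound (n : ℕ) (x : E) : |g x (iterate g M L n x) / iterate g M L n x| ≤ L := by
    have := hg.abs_sub_le x (hg.iterate_mem_Icc n x) hg.zero_mem
    rwa [hg.map_zero, sub_zero, sub_zero, ← div_le_iff₀ (abs_pos.2 (hg.iterate_pos n x).ne'),
      ← abs_div] at this
  have hcont (n : ℕ) :
      Continuous fun x => φ x ^ 2 * (g x (iterate g M L n x) / iterate g M L n x) :=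
    hsq.mul (hg.continuous_iterate_div n)
  refine le_of_tendsto' (tendsto_integral_of_dominated_convergence (fun x => φ x ^ 2 * L)
    (fun n => (hcont n).aestronglyMeasurable)
    ((hsq.integrable_of_hasCompactSupport (hasCompactSupport_sq hc)).mul_const _)
    (fun n => Eventually.of_forall fun x => ?_) (Eventually.of_forall fun x => ?_))
    (hg.integral_sq_mul_iterate_div_le hφ hc)
  · rw [norm_mul, Real.norm_of_nonneg (sq_nonneg _)]
    exact mul_le_mul_of_nonneg_left (bound n x) (sq_nonneg _)
  · exact ((ha x).comp (tendsto_nhdsWithin_iff.2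
      ⟨hzero x, Eventually.of_forall fun n => hg.iterate_pos n x⟩)).const_mul _

theorem exists_pos_solution {a φ : E → ℝ}
    (ha : ∀ x, Tendsto (fun t => g x t / t) (𝓝[>] 0) (𝓝 (a x))) (hφ : ContDiff ℝ 1 φ)
    (hc : HasCompactSupport φ) (hlt : ∫ x, ‖gradient φ x‖ ^ 2 < ∫ x, φ x ^ 2 * a x) :
    ∃ u : E → ℝ, ContDiff ℝ 2 u ∧ (∀ x, 0 < u x) ∧ ∀ x, -Δ u x = g x (u x) := by
  obtain ⟨u, hu⟩ := hg.exists_tendsto_iterate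
  have hK : 0 < (L + 1 : ℝ) := by positivity
  have hmem (x : E) : u x ∈ Icc 0 M :=
    isClosed_Icc.mem_of_tendsto (hu x) (Eventually.of_forall fun n => hg.iterate_mem_Icc n x)
  have hbdd := hg.abs_shiftedReaction_le hmem
  have hfix := hg.lapResolvent_shiftedReaction_of_tendsto_iterate hu
  obtain ⟨D, hD⟩ := hg.exists_holderWith_shiftedReaction_of_tendsto_iterate hu
  obtain ⟨x₁, hx₁⟩ : ∃ x₁, 0 < u x₁ := by
    by_contra! hle
    have hzero (x : E) : u x = 0 := (hle x).antisymm (hmem x).1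
    exact hlt.not_ge (hg.integral_sq_mul_slope_le ha (fun x => hzero x ▸ hu x) hφ hc)
  refine ⟨u, ?_, fun x => ?_, fun x => ?_⟩
  · exact hfix ▸ contDiff_two_lapResolvent hK hg.exponent_pos hD hbdd
  · have := lapResolvent_pos hK (hD.continuous hg.exponent_pos) hbdd
      (hg.shiftedReaction_nonneg hmem) (hx₁.trans_le (hg.le_shiftedReaction hmem x₁)) x
    rwa [hfix] at this
  · have := laplacian_lapResolvent hK hg.exponent_pos hD hbdd x
    rw [hfix] at this
    rw [this, shiftedReaction]
    ring

end IsReaction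

end MonotoneIteration

section LogisticEquation

lemma lap_eq_laplacian {N : ℕ} {u : Euc N → ℝ} (hu : ContDiff ℝ 2 u) (x : Euc N) :
    lap N u x = Δ u x := by
  have hdiff : DifferentiableAt ℝ (fderiv ℝ u) x :=
    ((hu.fderiv_right (m := 1) le_rfl).differentiable one_ne_zero).differentiableAt
  rw [laplacian_eq_sum_fderiv_fderiv (EuclideanSpace.basisFun (Fin N) ℝ), lap]
  refine Finset.sum_congr rfl fun i _ => ?_
  rw [(hdiff.hasFDerivAt.clm_apply (hasFDerivAt_const _ x)).fderiv]
  simp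

lemma holderWith_mul_mul_sub {E : Type*} [PseudoMetricSpace E] {V : E → ℝ} {C β : ℝ≥0}
    (hV : HolderWith C β V) (lam c : ℝ) {t M : ℝ} (ht : t ∈ Icc 0 M) :
    HolderWith (C * ‖lam * M‖₊) β fun x => lam * (V x * t - c) := by
  have hle : ‖lam * t‖₊ ≤ ‖lam * M‖₊ := by
    rw [nnnorm_mul, nnnorm_mul]
    gcongr
    exact abs_le_abs_of_nonneg ht.1 ht.2
  have hsmul := (hV.smul (lam * t)).mono (mul_le_mul_right hle C)
  have hadd := hsmul.add (HolderWith.const (C := 0) (y := -(lam * c)))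
  have heq : (fun x => lam * (V x * t - c)) = (lam * t) • V + fun _ => -(lam * c) := by
    ext x
    simp only [Pi.add_apply, Pi.smul_apply, smul_eq_mul]
    ring
  rwa [heq, ← add_zero (C * _)]

lemma lipschitzOnWith_mul_mul_sub {f : ℝ → ℝ} {D : ℝ≥0} {s : Set ℝ} (hf : LipschitzOnWith D f s)
    {v B : ℝ} (hv : |v| ≤ B) (lam : ℝ) :
    LipschitzOnWith (‖lam‖₊ * (B.toNNReal + D)) (fun t => lam * (v * t - f t)) s := by
  have hmul : LipschitzWith B.toNNReal fun t : ℝ => v • t :=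
    (lipschitzWith_smul v).weaken (NNReal.le_toNNReal_of_coe_le hv)
  exact (lipschitzWith_smul lam).comp_lipschitzOnWith (hmul.lipschitzOnWith.sub hf)

lemma isReaction_logistic {E : Type*} [PseudoMetricSpace E] {V : E → ℝ} {f : ℝ → ℝ}
    {C β : ℝ≥0} {B M lam : ℝ} (hβ : 0 < β) (hβ₁ : β ≤ 1) (hV : HolderWith C β V)
    (hB : ∀ x, |V x| ≤ B) (hf : ContDiff ℝ 1 f) (hf₀ : f 0 = 0) (hM : 0 < M)
    (hVM : ∀ x, V x * M ≤ f M) (hlam : 0 ≤ lam) :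
    ∃ L C', IsReaction (fun x t => lam * (V x * t - f t)) M L C' β := by
  obtain ⟨D, hD⟩ := hf.contDiffOn.exists_lipschitzOnWith one_ne_zero (convex_Icc 0 M) isCompact_Icc
  refine ⟨‖lam‖₊ * (B.toNNReal + D), C * ‖lam * M‖₊, hM, hβ, hβ₁, fun x => ?_, fun x => ?_,
    fun x => lipschitzOnWith_mul_mul_sub hD (hB x) lam,
    fun t ht => holderWith_mul_mul_sub hV lam (f t) ht⟩
  · rw [mul_zero, hf₀, sub_zero, mul_zero]
  · exact mul_nonpos_of_nonneg_of_nonpos hlam (sub_nonpos.2 (hVM x))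

lemma tendsto_div_of_hasDerivAt_zero {f : ℝ → ℝ} {f' : ℝ} (hf : HasDerivAt f f' 0)
    (hf₀ : f 0 = 0) : Tendsto (fun t => f t / t) (𝓝[>] 0) (𝓝 f') := by
  have := (hasDerivAt_iff_tendsto_slope_zero.1 hf).mono_left (nhdsGT_le_nhdsNE 0)
  simpa only [zero_add, hf₀, sub_zero, smul_eq_mul, inv_mul_eq_div] using this

lemma hasDerivAt_logistic_zero {f : ℝ → ℝ} (hf : HasDerivAt f 0 0) (v lam : ℝ) :
    HasDerivAt (fun t => lam * (v * t - f t)) (lam * v) 0 := by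
  simpa only [mul_one, sub_zero] using
    (((hasDerivAt_id' (0 : ℝ)).const_mul v).fun_sub hf).const_mul lam

lemma exists_pos_forall_mul_le {X : Type*} {V : X → ℝ} {f : ℝ → ℝ} {B : ℝ} {L : EReal}
    (hB : ∀ x, |V x| ≤ B) (hL : Tendsto (fun u => ((f u / u : ℝ) : EReal)) atTop (𝓝 L))
    (hlt : ((⨆ x, |V x| : ℝ) : EReal) < L) : ∃ M, 0 < M ∧ ∀ x, V x * M ≤ f M := by
  obtain ⟨M, hM, hpos⟩ := ((hL.eventually (lt_mem_nhds hlt)).and (eventually_gt_atTop 0)).exists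
  refine ⟨M, hpos, fun x => (le_div_iff₀ hpos).1 ?_⟩
  calc V x ≤ |V x| := le_abs_self _
    _ ≤ ⨆ x, |V x| := le_ciSup ⟨B, forall_mem_range.2 hB⟩ x
    _ ≤ f M / M := (EReal.coe_lt_coe_iff.1 hM).le

end LogisticEquation

theorem stmt4_general {N : ℕ} {V : Euc N → ℝ} {f : ℝ → ℝ} {C β : ℝ≥0} {B M lam : ℝ}
    (hβ : 0 < β) (hβ₁ : β ≤ 1) (hV : HolderWith C β V) (hB : ∀ x, |V x| ≤ B)
    (hpos : ∃ x, 0 < V x) (hf : ContDiff ℝ 1 f) (hf₀ : f 0 = 0) (hf₁ : deriv f 0 = 0)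
    (hM : 0 < M) (hVM : ∀ x, V x * M ≤ f M) (hlam : Lam N V < lam) :
    ∃ u : Euc N → ℝ, ContDiff ℝ 2 u ∧ (∀ x, 0 < u x) ∧
      ∀ x, -lap N u x = lam * (V x * u x - f (u x)) := by
  have hcont := hV.continuous hβ
  have hf' : HasDerivAt f 0 0 := by
    simpa only [hf₁] using (hf.differentiable one_ne_zero 0).hasDerivAt
  have hlam₀ : 0 ≤ lam := (Lam_nonneg hcont hpos).trans hlam.le
  obtain ⟨L, C', hg⟩ := isReaction_logistic hβ hβ₁ hV hB hf hf₀ hM hVM hlam₀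
  have hslope (x : Euc N) :
      Tendsto (fun t => lam * (V x * t - f t) / t) (𝓝[>] 0) (𝓝 (lam * V x)) :=
    tendsto_div_of_hasDerivAt_zero (hasDerivAt_logistic_zero hf' (V x) lam) (hg.map_zero x)
  obtain ⟨φ, hφ, hc, hlt⟩ := exists_integral_norm_gradient_sq_lt hcont hpos hlam
  have henergy : lam * ∫ x, V x * φ x ^ 2 = ∫ x, φ x ^ 2 * (lam * V x) := by
    rw [← integral_const_mul]
    exact integral_congr_ae (.of_forall fun x => by ring)
  obtain ⟨u, hu, hu₀, heq⟩ :=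
    hg.exists_pos_solution hslope (hφ.of_le (mod_cast le_top)) hc (hlt.trans_eq henergy)
  exact ⟨u, hu, hu₀, fun x => lap_eq_laplacian hu x ▸ heq x⟩

/-- for every `λ > Λ`, the logistic equation has an entire positive solution
(no decay at infinity asserted). -/
theorem stmt4 (N : ℕ) (hN : 3 ≤ N) (V V₁ V₂ : Euc N → ℝ)
    (hV : CondV N V V₁ V₂)
    (f : ℝ → ℝ) (hf : CondF N V f)
    (lam : ℝ) (hlam : Lam N V < lam) :
    ∃ u : Euc N → ℝ, ContDiff ℝ 2 u ∧ (∀ x, 0 < u x) ∧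
      ∀ x, -lap N u x = lam * (V x * u x - f (u x)) := by
  obtain ⟨⟨C, β, hβ, hβ₁, hV⟩, ⟨B, hB⟩, hpos, -⟩ := hV
  obtain ⟨hf, -, hf₀, hf₁, -, -, L, hL, hlt⟩ := hf
  obtain ⟨M, hM, hVM⟩ := exists_pos_forall_mul_le hB hL hlt
  exact stmt4_general hβ hβ₁ hV hB hpos hf hf₀ hf₁ hM hVM hlam

end
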